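/- arXiv:1110.6898 — 11 statements merged into one kernel-verified Lean document; each statement's English description precedes it below -/
import Mathlib

section
/- Let m be a positive integer, q0 = 2^m, q = 2^(2m+1). Suppose (a,b,c,d) and (a',b',c',d') are quadruples of natural numbers with b ≤ 1, b' ≤ 1, c ≤ q0 - 1, c' ≤ q0 - 1, d ≤ q0 - 1, d' ≤ q0 - 1. If a·q + b·(q+q0) + c·(q+2q0) + d·(q+2q0+1) = a'·q + b'·(q+q0) + c'·(q+2q0) + d'·(q+2q0+1), then (a,b,c,d) = (a',b',c',d'). -/
/-!
Write `q = r * q0 ^ 2`, where `r = 2` for the Suzuki curve. Collecting the multiples of `q`,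
`r * q0` and `q0` in the pole order gives the mixed-radix expansion
`d + q0 * (b + r * (c + d + q0 * (a + b + c + d)))`, in which `d` and `b` are genuine digits.
The third coefficient `c + d` may exceed the radix `q0`, but once `d` is known it can be cancelled,
which leaves the digit `c`. The leading coefficient then gives `a`.
-/

theorem eq_and_eq_of_add_mul_eq_add_mul {k x x' y y' : ℕ} (hx : x < k) (hx' : x' < k)
    (h : x + k * y = x' + k * y') : x = x' ∧ y = y' := by
  have hk : 0 < k := Nat.zero_lt_of_lt hx
  obtain ⟨hdiv, hmod⟩ := (Nat.div_mod_unique hk).mpr ⟨h, hx⟩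
  obtain ⟨hdiv', hmod'⟩ := (Nat.div_mod_unique hk).mpr ⟨rfl, hx'⟩
  exact ⟨hmod.symm.trans hmod', hdiv.symm.trans hdiv'⟩

theorem pole_order_eq_mixed_radix (r q0 a b c d : ℕ) :
    a * (r * q0 ^ 2) + b * (r * q0 ^ 2 + q0) + c * (r * q0 ^ 2 + r * q0) +
        d * (r * q0 ^ 2 + r * q0 + 1) =
      d + q0 * (b + r * (c + d + q0 * (a + b + c + d))) := by
  ring

theorem suzuki_pole_orders_injective_general {r q0 q a b c d a' b' c' d' : ℕ}
    (hq : q = r * q0 ^ 2) (hb : b < r) (hb' : b' < r) (hc : c < q0) (hc' : c' < q0)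
    (hd : d < q0) (hd' : d' < q0)
    (heq : a * q + b * (q + q0) + c * (q + r * q0) + d * (q + r * q0 + 1) =
      a' * q + b' * (q + q0) + c' * (q + r * q0) + d' * (q + r * q0 + 1)) :
    (a, b, c, d) = (a', b', c', d') := by
  rw [hq, pole_order_eq_mixed_radix, pole_order_eq_mixed_radix] at heq
  obtain ⟨rfl, h_quot_d⟩ := eq_and_eq_of_add_mul_eq_add_mul hd hd' heq
  obtain ⟨rfl, h_quot_b⟩ := eq_and_eq_of_add_mul_eq_add_mul hb hb' h_quot_d
  have h_cancel_d : c + q0 * (a + b + c + d) = c' + q0 * (a' + b + c' + d) := by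
    linarith
  obtain ⟨rfl, h_total⟩ := eq_and_eq_of_add_mul_eq_add_mul hc hc' h_cancel_d
  obtain rfl : a = a' := by linarith
  rfl

theorem suzuki_pole_orders_injective
    (m : ℕ) (hm : 1 ≤ m) (q0 q : ℕ) (hq0 : q0 = 2 ^ m) (hq : q = 2 ^ (2 * m + 1))
    (a b c d a' b' c' d' : ℕ)
    (hb : b ≤ 1) (hb' : b' ≤ 1)
    (hc : c ≤ q0 - 1) (hc' : c' ≤ q0 - 1)
    (hd : d ≤ q0 - 1) (hd' : d' ≤ q0 - 1)
    (heq : a * q + b * (q + q0) + c * (q + 2 * q0) + d * (q + 2 * q0 + 1) =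
           a' * q + b' * (q + q0) + c' * (q + 2 * q0) + d' * (q + 2 * q0 + 1)) :
    (a, b, c, d) = (a', b', c', d') := by
  have hq0_pos : 0 < q0 := hq0 ▸ Nat.two_pow_pos m
  have hq_eq : q = 2 * q0 ^ 2 := by rw [hq, hq0]; ring
  exact suzuki_pole_orders_injective_general hq_eq (by omega) (by omega) (by omega) (by omega)
    (by omega) (by omega) heq
end

section
/- Let m be a positive integer, q0 = 2^m, q = 2^(2m+1), and g = q0·(q-1). Let SG be the additive submonoid of the natural numbers generated by {q, q+q0, q+2q0, q+2q0+1}. Then the number of elements n of SG with 0 ≤ n ≤ 2g - 2 equals g. -/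
/-!
Gluing a numerical semigroup `S` along `e ∈ S` coprime to `d` gives `d S + ℕ e`. Every integer is
uniquely `d y + k e` with `0 ≤ k < d`, and it lies in the gluing iff `y ∈ S`. If exactly one of `x`
and `F - x` lies in `S` for every integer `x`, the reflection `y ↦ F - y`, `k ↦ d - 1 - k`
therefore shows that the gluing has the same property with `d F + (d - 1) e` in place of `F`.

The Suzuki semigroup arises from `ℕ`, where `F = -1`, by three gluings, with `(d, e)` equal to
`(q0, q0 + 1)`, `(2, 2 q0 + 1)` and `(q0, q + 2 q0 + 1)`. They end at `F = 2 g - 1`, so the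
reflection `n ↦ 2 g - 1 - n` exchanges elements and gaps below `2 g`, and there are `g` of each.
-/

/-- Symmetry of a numerical semigroup with Frobenius number `F`. The semigroup is viewed as a
submonoid of `ℤ`, so that the reflection `x ↦ F - x` needs no truncation and `ℕ` has Frobenius
number `-1`. Negative elements are not excluded, but only without them is `F` the largest gap. -/
def IsSymmetricSemigroup (S : AddSubmonoid ℤ) (F : ℤ) : Prop :=
  ∀ x, x ∈ S ↔ F - x ∉ S

/-- The gluing `d S + ℕ e` of a semigroup `S` with the semigroup generated by `e`. The name is
usual for `e ∈ S` coprime to `d > 0`; for other `d` and `e` this is merely the sum. -/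
def gluing (S : AddSubmonoid ℤ) (d e : ℤ) : AddSubmonoid ℤ :=
  S.map (AddMonoidHom.mulLeft d) ⊔ AddSubmonoid.multiples e

section Gluing

variable {S : AddSubmonoid ℤ} {d e F : ℤ}

theorem mem_gluing {x : ℤ} : x ∈ gluing S d e ↔ ∃ s ∈ S, ∃ k : ℕ, d * s + k * e = x := by
  simp [gluing, AddSubmonoid.mem_sup, AddSubmonoid.mem_multiples_iff]

theorem gluing_closure (A : Set ℤ) (d e : ℤ) :
    gluing (AddSubmonoid.closure A) d e =
      AddSubmonoid.closure (insert e ((fun a ↦ d * a) '' A)) := by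
  rw [gluing, AddMonoidHom.map_mclosure, AddSubmonoid.multiples_eq_closure,
    ← AddSubmonoid.closure_union, Set.union_singleton, AddMonoidHom.coe_mulLeft]

theorem exists_eq_mul_add_mul_of_isCoprime (hd : 0 < d) (hde : IsCoprime d e) (x : ℤ) :
    ∃ y k : ℤ, 0 ≤ k ∧ k < d ∧ x = d * y + k * e := by
  obtain ⟨u, v, huv⟩ := hde
  refine ⟨x * u + e * (x * v / d), x * v % d, Int.emod_nonneg _ hd.ne', Int.emod_lt_of_pos _ hd, ?_⟩
  linear_combination -x * huv - e * Int.emod_add_mul_ediv (x * v) d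

theorem mul_add_mul_mem_gluing_iff (hde : IsCoprime d e) (he : e ∈ S) {y k : ℤ}
    (hk : 0 ≤ k) (hkd : k < d) : d * y + k * e ∈ gluing S d e ↔ y ∈ S := by
  have hd : 0 < d := hk.trans_lt hkd
  lift k to ℕ using hk
  refine ⟨fun h ↦ ?_, fun hy ↦ mem_gluing.2 ⟨y, hy, k, rfl⟩⟩
  obtain ⟨s, hs, j, hj⟩ := mem_gluing.1 h
  obtain ⟨t, ht⟩ : d ∣ j - k := hde.dvd_of_dvd_mul_right ⟨y - s, by linear_combination hj⟩
  have hlt : d * (-1) < d * t := by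
    rw [← ht]
    omega
  have ht0 : 0 ≤ t := by
    have := lt_of_mul_lt_mul_left hlt hd.le
    omega
  lift t to ℕ using ht0
  have hy : y = s + t • e := by
    refine mul_left_cancel₀ hd.ne' ?_
    rw [nsmul_eq_mul]
    linear_combination e * ht - hj
  exact hy ▸ add_mem hs (nsmul_mem he t)

theorem IsSymmetricSemigroup.gluing (hS : IsSymmetricSemigroup S F) (hd : 0 < d)
    (hde : IsCoprime d e) (he : e ∈ S) :
    IsSymmetricSemigroup (gluing S d e) (d * F + (d - 1) * e) := by
  intro x
  obtain ⟨y, k, hk, hkd, rfl⟩ := exists_eq_mul_add_mul_of_isCoprime hd hde x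
  have hreflect : d * F + (d - 1) * e - (d * y + k * e) = d * (F - y) + (d - 1 - k) * e := by
    ring
  rw [hreflect, mul_add_mul_mem_gluing_iff hde he hk hkd,
    mul_add_mul_mem_gluing_iff hde he (by omega) (by omega), hS y]

end Gluing

theorem mem_closure_one_iff_nonneg {x : ℤ} : x ∈ AddSubmonoid.closure {1} ↔ 0 ≤ x := by
  simp only [AddSubmonoid.mem_closure_singleton, nsmul_one]
  exact ⟨fun ⟨n, hn⟩ ↦ hn ▸ n.cast_nonneg, fun hx ↦ ⟨x.toNat, Int.toNat_of_nonneg hx⟩⟩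

theorem isSymmetricSemigroup_closure_one :
    IsSymmetricSemigroup (AddSubmonoid.closure {1}) (-1) := by
  intro x
  rw [mem_closure_one_iff_nonneg, mem_closure_one_iff_nonneg]
  omega

theorem isSymmetricSemigroup_closure_pair {a b : ℤ} (ha : 0 < a) (hb : 0 ≤ b)
    (hab : IsCoprime a b) :
    IsSymmetricSemigroup (AddSubmonoid.closure {a, b}) (a * b - a - b) := by
  convert isSymmetricSemigroup_closure_one.gluing ha hab (mem_closure_one_iff_nonneg.2 hb) using 1
  · rw [gluing_closure, Set.image_singleton, mul_one, Set.pair_comm]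
  · ring

theorem isSymmetricSemigroup_closure_triple {r : ℤ} (hr : 0 < r) :
    IsSymmetricSemigroup (AddSubmonoid.closure {2 * r, 2 * r + 1, 2 * r + 2})
      (2 * r ^ 2 - 1) := by
  have hpair := isSymmetricSemigroup_closure_pair hr (by omega : 0 ≤ r + 1) ⟨-1, 1, by ring⟩
  have hmem : 2 * r + 1 ∈ AddSubmonoid.closure {r, r + 1} := by
    rw [AddSubmonoid.mem_closure_pair]
    exact ⟨1, 1, by rw [one_nsmul, one_nsmul]; ring⟩
  have hcop : IsCoprime 2 (2 * r + 1) := ⟨-r, 1, by ring⟩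
  convert hpair.gluing two_pos hcop hmem using 1
  · rw [gluing_closure, Set.image_pair, Set.insert_comm, mul_add, mul_one]
  · ring

theorem isSymmetricSemigroup_closure_suzuki {r : ℤ} (hr : 0 < r) :
    IsSymmetricSemigroup
      (AddSubmonoid.closure
        {2 * r ^ 2, 2 * r ^ 2 + r, 2 * r ^ 2 + 2 * r, 2 * r ^ 2 + 2 * r + 1})
      (4 * r ^ 3 - 2 * r - 1) := by
  have hmem : 2 * r ^ 2 + 2 * r + 1 ∈ AddSubmonoid.closure {2 * r, 2 * r + 1, 2 * r + 2} := by
    refine AddSubmonoid.closure_mono (s := {2 * r, 2 * r + 1}) (by simp [Set.insert_subset_iff]) ?_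
    rw [AddSubmonoid.mem_closure_pair]
    refine ⟨r.toNat, 1, ?_⟩
    rw [one_nsmul, nsmul_eq_mul, Int.toNat_of_nonneg hr.le]
    ring
  have hcop : IsCoprime r (2 * r ^ 2 + 2 * r + 1) := ⟨-(2 * r + 2), 1, by ring⟩
  convert (isSymmetricSemigroup_closure_triple hr).gluing hr hcop hmem using 1
  · rw [gluing_closure, Set.image_insert_eq, Set.image_pair,
      show r * (2 * r) = 2 * r ^ 2 by ring, show r * (2 * r + 1) = 2 * r ^ 2 + r by ring,
      show r * (2 * r + 2) = 2 * r ^ 2 + 2 * r by ring]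
    congr 1
    ext x
    simp only [Set.mem_insert_iff, Set.mem_singleton_iff]
    tauto
  · ring

theorem natCast_mem_closure_image {A : Set ℕ} {n : ℕ} :
    (n : ℤ) ∈ AddSubmonoid.closure ((↑) '' A : Set ℤ) ↔ n ∈ AddSubmonoid.closure A := by
  have hmap := AddMonoidHom.map_mclosure (Nat.castAddMonoidHom ℤ) A
  rw [Nat.coe_castAddMonoidHom] at hmap
  rw [← hmap]
  exact AddSubmonoid.mem_map_iff_mem Nat.cast_injective

theorem two_mul_count_of_reflect {p : ℕ → Prop} [DecidablePred p] {N : ℕ}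
    (h : ∀ n < N, p n ↔ ¬p (N - 1 - n)) : 2 * Nat.count p N = N := by
  have hsum : Nat.count p N = ∑ n ∈ Finset.range N, if p n then 1 else 0 := by
    rw [Nat.count_eq_card_filter_range, Finset.card_filter]
  calc
    2 * Nat.count p N
      = ∑ n ∈ Finset.range N, ((if p n then 1 else 0) + if p (N - 1 - n) then 1 else 0) := by
        rw [Finset.sum_add_distrib, Finset.sum_range_reflect (fun n ↦ if p n then 1 else 0) N,
          ← hsum, two_mul]
    _ = ∑ _n ∈ Finset.range N, 1 := by
        refine Finset.sum_congr rfl fun n hn ↦ ?_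
        by_cases hp : p (N - 1 - n) <;> simp [h n (Finset.mem_range.1 hn), hp]
    _ = N := by simp

theorem IsSymmetricSemigroup.ncard_natCast_mem {S : AddSubmonoid ℤ} {g : ℕ}
    (hS : IsSymmetricSemigroup S (2 * g - 1)) (hg : 0 < g) :
    {n : ℕ | (n : ℤ) ∈ S ∧ n ≤ 2 * g - 2}.ncard = g := by
  classical
  have hlast : ((2 * g - 1 : ℕ) : ℤ) ∉ S := by
    have := (hS 0).1 (zero_mem S)
    rwa [show ((2 * g - 1 : ℕ) : ℤ) = 2 * g - 1 - 0 by omega]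
  have hcount : 2 * Nat.count (fun n : ℕ ↦ (n : ℤ) ∈ S) (2 * g) = 2 * g := by
    refine two_mul_count_of_reflect fun n hn ↦ ?_
    rw [hS n, show ((2 * g - 1 - n : ℕ) : ℤ) = 2 * g - 1 - n by omega]
  have hset : {n : ℕ | (n : ℤ) ∈ S ∧ n ≤ 2 * g - 2} =
      ({n ∈ Finset.range (2 * g) | (n : ℤ) ∈ S} : Finset ℕ) := by
    ext n
    simp only [Set.mem_ofPred_eq, Finset.coe_filter, Finset.mem_range]
    have hne : (n : ℤ) ∈ S → n ≠ 2 * g - 1 := fun hn h ↦ hlast (h ▸ hn)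
    grind
  rw [hset, Set.ncard_coe_finset, ← Nat.count_eq_card_filter_range]
  omega

theorem suzuki_semigroup_count_general
    (q0 q g : ℕ) (hq0 : 0 < q0) (hq : q = 2 * q0 ^ 2) (hg : g = q0 * (q - 1)) :
    {n : ℕ | n ∈ AddSubmonoid.closure ({q, q + q0, q + 2 * q0, q + 2 * q0 + 1} : Set ℕ) ∧
      n ≤ 2 * g - 2}.ncard = g := by
  have hq1 : 1 < q := by nlinarith
  have hg0 : 0 < g := hg ▸ Nat.mul_pos hq0 (Nat.sub_pos_of_lt hq1)
  have hfrob : (2 * g - 1 : ℤ) = 4 * q0 ^ 3 - 2 * q0 - 1 := by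
    rw [hg, Nat.cast_mul, Nat.cast_sub hq1.le, hq]
    push_cast
    ring
  have hsymm := isSymmetricSemigroup_closure_suzuki (Int.natCast_pos.2 hq0)
  rw [← hfrob] at hsymm
  convert hsymm.ncard_natCast_mem hg0 using 5 with n
  rw [← natCast_mem_closure_image]
  simp [Set.image_insert_eq, hq]

theorem suzuki_semigroup_count
    (m : ℕ) (hm : 1 ≤ m) (q0 q g : ℕ)
    (hq0 : q0 = 2 ^ m) (hq : q = 2 ^ (2 * m + 1)) (hg : g = q0 * (q - 1)) :
    {n : ℕ | n ∈ AddSubmonoid.closure ({q, q + q0, q + 2 * q0, q + 2 * q0 + 1} : Set ℕ) ∧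
      n ≤ 2 * g - 2}.ncard = g :=
  suzuki_semigroup_count_general q0 q g (hq0 ▸ Nat.two_pow_pos m) (by rw [hq, hq0]; ring) hg
end

section
/- Let m be a positive integer, q0 = 2^m, q = 2^(2m+1), and g = q0·(q-1). Then the number of quadruples (a,b,c,d) of natural numbers with b ≤ 1, c ≤ q0 - 1, d ≤ q0 - 1, and a·q + b·(q+q0) + c·(q+2q0) + d·(q+2q0+1) ≤ 2g - 2 equals g. -/
/-!
The weights `w = b(q + q0) + c(q + 2q0) + d(q + 2q0 + 1)`, for `(b, c, d)` in the box `b ≤ 1`,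
`c, d ≤ q0 - 1`, represent each residue class modulo `q` exactly once: modulo `q` they are
`q0(2(c + d) + b) + d`, whose mixed radix digits determine first `d`, then `b`, then `c`. Hence
`(a, b, c, d) ↦ aq + w` is injective, and its image `H` consists of the `n` with `w ≤ n`, where `w`
is the weight congruent to `n`. Reflecting the box turns `w` into `2g - 1 + q - w`, so exactly one
of `n` and `2g - 1 - n` lies in `H`. Therefore `H` contains half of the `2g` numbers below `2g`, and
it omits `2g - 1` because it contains `0`.
-/

section ResidueSystems

variable {ι : Type*} {q g F : ℕ} {s : Set ι} {w : ι → ℕ}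

/-- The weights `w i`, for `i ∈ s`, form a complete residue system modulo `q`, indexed without
repetition. -/
def IsCompleteResidueSystem (q : ℕ) (s : Set ι) (w : ι → ℕ) : Prop :=
  Set.BijOn (fun i => (w i : ZMod q)) s Set.univ

/-- The set of all `a * q + w i` with `i ∈ s`. When the weights are the Apéry set of a numerical
semigroup with respect to `q`, this is the semigroup itself. -/
def aperySpan (q : ℕ) (s : Set ι) (w : ι → ℕ) : Set ℕ :=
  (fun x : ℕ × ι => x.1 * q + w x.2) '' {x | x.2 ∈ s}

theorem IsCompleteResidueSystem.eq_of_modEq (hw : IsCompleteResidueSystem q s w) {i j : ι}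
    (hi : i ∈ s) (hj : j ∈ s) (hij : w i ≡ w j [MOD q]) : i = j :=
  hw.injOn hi hj ((ZMod.natCast_eq_natCast_iff _ _ _).2 hij)

theorem IsCompleteResidueSystem.exists_modEq (hw : IsCompleteResidueSystem q s w) (n : ℕ) :
    ∃ i ∈ s, w i ≡ n [MOD q] := by
  obtain ⟨i, hi, hin⟩ := hw.surjOn (Set.mem_univ (n : ZMod q))
  exact ⟨i, hi, (ZMod.natCast_eq_natCast_iff _ _ _).1 hin⟩

theorem isCompleteResidueSystem_of_card_eq [NeZero q] {t : Finset ι} (hcard : t.card = q)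
    (hinj : ∀ i ∈ t, ∀ j ∈ t, w i ≡ w j [MOD q] → i = j) :
    IsCompleteResidueSystem q (t : Set ι) w := by
  have hinjOn : Set.InjOn (fun i => (w i : ZMod q)) t := fun i hi j hj hij =>
    hinj i hi j hj ((ZMod.natCast_eq_natCast_iff _ _ _).1 hij)
  refine ⟨Set.mapsTo_univ _ _, hinjOn, ?_⟩
  rw [← Finset.coe_univ]
  exact Finset.surjOn_of_injOn_of_card_le _ (by simp) hinjOn (by simp [hcard, ZMod.card])

theorem IsCompleteResidueSystem.injOn_mul_add (hw : IsCompleteResidueSystem q s w) (hq : 0 < q) :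
    Set.InjOn (fun x : ℕ × ι => x.1 * q + w x.2) {x | x.2 ∈ s} := by
  rintro ⟨a, i⟩ hi ⟨b, j⟩ hj (hab : a * q + w i = b * q + w j)
  obtain rfl : i = j := hw.eq_of_modEq hi hj <| by
    simpa [Nat.ModEq] using congrArg (· % q) hab
  obtain rfl : a = b := Nat.eq_of_mul_eq_mul_right hq (Nat.add_right_cancel hab)
  rfl

theorem IsCompleteResidueSystem.mem_aperySpan_iff_le (hw : IsCompleteResidueSystem q s w) {i : ι}
    (hi : i ∈ s) {n : ℕ} (hin : w i ≡ n [MOD q]) : n ∈ aperySpan q s w ↔ w i ≤ n := by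
  constructor
  · rintro ⟨⟨a, j⟩, hj, rfl⟩
    obtain rfl : i = j := hw.eq_of_modEq hi hj (by simpa [Nat.ModEq] using hin)
    exact Nat.le_add_left _ _
  · intro hle
    obtain ⟨a, ha⟩ := (Nat.modEq_iff_dvd' hle).1 hin
    refine ⟨(a, i), hi, ?_⟩
    dsimp only
    rw [mul_comm, ← ha, Nat.sub_add_cancel hle]

theorem IsCompleteResidueSystem.mem_aperySpan_iff_notMem (hw : IsCompleteResidueSystem q s w)
    (hq : 0 < q) (hsymm : ∀ i ∈ s, ∃ j ∈ s, w i + w j = F + q) {x y : ℕ} (hxy : x + y = F) :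
    x ∈ aperySpan q s w ↔ y ∉ aperySpan q s w := by
  obtain ⟨i, hi, hix⟩ := hw.exists_modEq x
  obtain ⟨j, hj, hij⟩ := hsymm i hi
  have hjy : w j ≡ y [MOD q] := hix.add_left_cancel (by simp [hij, hxy, Nat.ModEq])
  rw [hw.mem_aperySpan_iff_le hi hix, hw.mem_aperySpan_iff_le hj hjy]
  constructor
  · omega
  · contrapose!
    intro hxi
    have : x + q ≤ w i := hix.symm.add_le_of_lt hxi
    omega

theorem ncard_inter_Iio_of_mem_iff_notMem {H : Set ℕ}
    (hH : ∀ x y, x + y + 1 = 2 * g → (x ∈ H ↔ y ∉ H)) :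
    (H ∩ Set.Iio (2 * g)).ncard = g := by
  have hreflect : (Set.Iio (2 * g) ∩ H).ncard = (Set.Iio (2 * g) \ H).ncard := by
    refine Set.ncard_congr (fun n _ => 2 * g - 1 - n) ?_ ?_ ?_
    · rintro n ⟨hn : n < 2 * g, hnH⟩
      exact ⟨by simp only [Set.mem_Iio]; omega, (hH n _ (by omega)).1 hnH⟩
    · rintro m n ⟨hm : m < 2 * g, -⟩ ⟨hn : n < 2 * g, -⟩ hmn
      omega
    · rintro n ⟨hn : n < 2 * g, hnH⟩
      exact ⟨2 * g - 1 - n, ⟨by simp only [Set.mem_Iio]; omega, (hH _ n (by omega)).2 hnH⟩,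
        by omega⟩
  have hsplit := Set.ncard_inter_add_ncard_sdiff_eq_ncard (Set.Iio (2 * g)) H
  rw [← hreflect, Set.ncard_Iio_nat, Set.inter_comm] at hsplit
  omega

theorem IsCompleteResidueSystem.ncard_setOf_mul_add_le (hw : IsCompleteResidueSystem q s w)
    (hq : 0 < q) (hg : 0 < g) (hsymm : ∀ i ∈ s, ∃ j ∈ s, w i + w j + 1 = 2 * g + q)
    (hzero : ∃ i ∈ s, w i = 0) :
    {x : ℕ × ι | x.2 ∈ s ∧ x.1 * q + w x.2 ≤ 2 * g - 2}.ncard = g := by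
  have hmem : ∀ x y, x + y + 1 = 2 * g → (x ∈ aperySpan q s w ↔ y ∉ aperySpan q s w) :=
    fun x y hxy => hw.mem_aperySpan_iff_notMem (F := 2 * g - 1) hq
      (fun i hi => (hsymm i hi).imp fun j hj => ⟨hj.1, by omega⟩) (by omega)
  have hgap : 2 * g - 1 ∉ aperySpan q s w := by
    obtain ⟨i, hi, hwi⟩ := hzero
    exact (hmem 0 _ (by omega)).1 ⟨(0, i), hi, by simp [hwi]⟩
  have himage : (fun x : ℕ × ι => x.1 * q + w x.2) '' {x | x.2 ∈ s ∧ x.1 * q + w x.2 ≤ 2 * g - 2} =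
      aperySpan q s w ∩ Set.Iio (2 * g) := by
    ext n
    constructor
    · rintro ⟨x, ⟨hx, hle⟩, rfl⟩
      exact ⟨⟨x, hx, rfl⟩, by simp only [Set.mem_Iio]; omega⟩
    · rintro ⟨⟨x, hx, rfl⟩, hlt : x.1 * q + w x.2 < 2 * g⟩
      have hne : x.1 * q + w x.2 ≠ 2 * g - 1 := fun h => hgap ⟨x, hx, h⟩
      exact ⟨x, ⟨hx, by omega⟩, rfl⟩
  rw [← ((hw.injOn_mul_add hq).mono fun _ hx => hx.1).ncard_image, himage,
    ncard_inter_Iio_of_mem_iff_notMem hmem]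

end ResidueSystems

theorem digit_eq_and_modEq_of_modEq {n k x x' d d' : ℕ} (hd : d < n) (hd' : d' < n)
    (h : n * x + d ≡ n * x' + d' [MOD n * k]) : d = d' ∧ x ≡ x' [MOD k] := by
  obtain rfl : d = d' := Nat.ModEq.eq_of_lt_of_lt
    (by simpa [Nat.ModEq] using h.of_mul_right k) hd hd'
  exact ⟨rfl, (Nat.ModEq.add_right_cancel' d h).mul_left_cancel' (by omega)⟩

section SuzukiWeights

variable {q0 q g : ℕ}

/-- The pole order at infinity of `z ^ b * h1 ^ c * h2 ^ d` on the Suzuki curve, for the triple of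
exponents `x = (b, c, d)`. -/
def suzukiWeight (q0 q : ℕ) (x : ℕ × ℕ × ℕ) : ℕ :=
  x.1 * (q + q0) + x.2.1 * (q + 2 * q0) + x.2.2 * (q + 2 * q0 + 1)

theorem suzukiWeight_modEq (b c d : ℕ) :
    suzukiWeight q0 q (b, c, d) ≡ q0 * (2 * (c + d) + b) + d [MOD q] := by
  have : suzukiWeight q0 q (b, c, d) = q0 * (2 * (c + d) + b) + d + q * (b + c + d) := by
    simp only [suzukiWeight]
    ring
  simp [this, Nat.ModEq]

theorem eq_of_suzukiWeight_modEq (hq0 : 0 < q0) (hq : q = 2 * q0 ^ 2) {x y : ℕ × ℕ × ℕ}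
    (hx : x ≤ (1, q0 - 1, q0 - 1)) (hy : y ≤ (1, q0 - 1, q0 - 1))
    (hxy : suzukiWeight q0 q x ≡ suzukiWeight q0 q y [MOD q]) : x = y := by
  obtain ⟨b, c, d⟩ := x
  obtain ⟨b', c', d'⟩ := y
  simp only [Prod.mk_le_mk] at hx hy
  have hradix :
      q0 * (2 * (c + d) + b) + d ≡ q0 * (2 * (c' + d') + b') + d' [MOD q0 * (2 * q0)] := by
    convert (suzukiWeight_modEq b c d).symm.trans (hxy.trans (suzukiWeight_modEq b' c' d')) using 1
    rw [hq]
    ring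
  obtain ⟨rfl, hbc⟩ := digit_eq_and_modEq_of_modEq (by omega) (by omega) hradix
  obtain ⟨rfl, hc⟩ := digit_eq_and_modEq_of_modEq (by omega) (by omega) hbc
  obtain rfl : c = c' :=
    (Nat.ModEq.add_right_cancel' d hc).eq_of_lt_of_lt (by omega) (by omega)
  rfl

theorem isCompleteResidueSystem_suzukiWeight (hq0 : 0 < q0) (hq : q = 2 * q0 ^ 2) :
    IsCompleteResidueSystem q (Set.Iic (1, q0 - 1, q0 - 1)) (suzukiWeight q0 q) := by
  have : NeZero q := ⟨by rw [hq]; positivity⟩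
  rw [← Finset.coe_Iic]
  refine isCompleteResidueSystem_of_card_eq ?_ fun x hx y hy =>
    eq_of_suzukiWeight_modEq hq0 hq (Finset.mem_Iic.1 hx) (Finset.mem_Iic.1 hy)
  rw [Finset.card_Iic_prod, Finset.card_Iic_prod]
  simp only [Nat.card_Iic, Nat.sub_add_cancel hq0, hq]
  ring

theorem suzukiWeight_add_suzukiWeight_sub (hq0 : 0 < q0) (hq : q = 2 * q0 ^ 2)
    (hg : g = q0 * (q - 1)) {x : ℕ × ℕ × ℕ} (hx : x ≤ (1, q0 - 1, q0 - 1)) :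
    suzukiWeight q0 q x + suzukiWeight q0 q ((1, q0 - 1, q0 - 1) - x) + 1 = 2 * g + q := by
  obtain ⟨b, c, d⟩ := x
  obtain ⟨hb, hc, hd⟩ := hx
  have hq1 : 0 < q := by rw [hq]; positivity
  simp only [suzukiWeight, Prod.mk_sub_mk] at hb hc hd ⊢
  zify [hb, hc, hd, hq0, hq1] at hq hg ⊢
  rw [hg, hq]
  ring

end SuzukiWeights

theorem suzuki_basis_count_general
    (q0 q g : ℕ) (hq0 : 0 < q0) (hq : q = 2 * q0 ^ 2) (hg : g = q0 * (q - 1)) :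
    {x : ℕ × ℕ × ℕ × ℕ | x.2.1 ≤ 1 ∧ x.2.2.1 ≤ q0 - 1 ∧ x.2.2.2 ≤ q0 - 1 ∧
      x.1 * q + x.2.1 * (q + q0) + x.2.2.1 * (q + 2 * q0) + x.2.2.2 * (q + 2 * q0 + 1) ≤
        2 * g - 2}.ncard = g := by
  have hq2 : 2 ≤ q := by nlinarith
  have hgpos : 0 < g := hg ▸ Nat.mul_pos hq0 (by omega)
  have hcount := (isCompleteResidueSystem_suzukiWeight hq0 hq).ncard_setOf_mul_add_le
    (by omega) hgpos
    (fun x hx => ⟨_, Set.mem_Iic.2 tsub_le_self, suzukiWeight_add_suzukiWeight_sub hq0 hq hg hx⟩)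
    ⟨0, Set.mem_Iic.2 zero_le, by simp [suzukiWeight]⟩
  simpa only [suzukiWeight, Set.mem_Iic, Prod.le_def, and_assoc, ← add_assoc] using hcount

theorem suzuki_basis_count
    (m : ℕ) (hm : 1 ≤ m) (q0 q g : ℕ)
    (hq0 : q0 = 2 ^ m) (hq : q = 2 ^ (2 * m + 1)) (hg : g = q0 * (q - 1)) :
    {x : ℕ × ℕ × ℕ × ℕ | x.2.1 ≤ 1 ∧ x.2.2.1 ≤ q0 - 1 ∧ x.2.2.2 ≤ q0 - 1 ∧
      x.1 * q + x.2.1 * (q + q0) + x.2.2.1 * (q + 2 * q0) + x.2.2.2 * (q + 2 * q0 + 1) ≤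
        2 * g - 2}.ncard = g :=
  suzuki_basis_count_general q0 q g (by rw [hq0]; positivity) (by rw [hq, hq0]; ring) hg
end

section
/- Let m be a positive integer, q0 = 2^m, q = 2^(2m+1), and g = q0·(q-1). Then the number of quadruples (a,b,c,d) of natural numbers with b ≤ 1, c ≤ q0 - 1, d ≤ q0 - 1, and a·q + b·(q+q0) + c·(q+2q0) + d·(q+2q0+1) ≤ g - 1 equals q0·(q0+1)·(2q0+1)/6. -/
/-!
Every generator of the semigroup of pole orders lies between `q` and `q + 2 * q0 + 1`, and
`g - 1 = (q0 - 1) * (q + 2 * q0 + 1) < q0 * q`. Hence the pole order bound only sees the total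
degree: it says `a + b + c + d < q0`. Counting such quadruples with `b ≤ 1` by two applications of
the hockey-stick identity gives `(q0 + 2).choose 3 + (q0 + 1).choose 3`.
-/

open Finset

theorem sum_mul_le_iff_sum_le {ι : Type*} {s : Finset ι} {x w : ι → ℕ} {u v N G : ℕ}
    (hu : ∀ i ∈ s, u ≤ w i) (hv : ∀ i ∈ s, w i ≤ v) (hN : N * v ≤ G) (hG : G < (N + 1) * u) :
    ∑ i ∈ s, x i * w i ≤ G ↔ ∑ i ∈ s, x i ≤ N := by
  constructor <;> intro h
  · have lower : (∑ i ∈ s, x i) * u ≤ ∑ i ∈ s, x i * w i := by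
      rw [sum_mul]
      exact sum_le_sum fun i hi ↦ Nat.mul_le_mul_left _ (hu i hi)
    exact Nat.lt_succ_iff.mp (Nat.lt_of_mul_lt_mul_right ((lower.trans h).trans_lt hG))
  · calc ∑ i ∈ s, x i * w i ≤ (∑ i ∈ s, x i) * v := by
          rw [sum_mul]
          exact sum_le_sum fun i hi ↦ Nat.mul_le_mul_left _ (hv i hi)
      _ ≤ N * v := Nat.mul_le_mul_right _ h
      _ ≤ G := hN

theorem ncard_setOf_mem_and_add_lt {α : Type*} (s : Finset α) (f : α → ℕ) (n : ℕ) :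
    {x : ℕ × α | x.2 ∈ s ∧ x.1 + f x.2 < n}.ncard = ∑ y ∈ s, (n - f y) := by
  let e : (_ : α) × ℕ ≃ ℕ × α := (Equiv.sigmaEquivProd α ℕ).trans (Equiv.prodComm α ℕ)
  have preimage_eq : e ⁻¹' {x : ℕ × α | x.2 ∈ s ∧ x.1 + f x.2 < n} =
      (s.sigma fun y ↦ range (n - f y) : Finset ((_ : α) × ℕ)) := by
    ext ⟨y, a⟩
    simp [e, Nat.lt_sub_iff_add_lt]
  rw [← Set.ncard_preimage_of_injective_subset_range e.injective (by simp), preimage_eq,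
    Set.ncard_coe_finset, card_sigma]
  simp only [card_range]

theorem sum_range_sub_add_choose_succ (j : ℕ) {k n : ℕ} (hkn : k ≤ n) :
    ∑ i ∈ range n, (k - i + j).choose (j + 1) = (k + j + 1).choose (j + 2) := by
  induction k generalizing n with
  | zero => simp
  | succ k ih =>
    obtain ⟨n, rfl⟩ := Nat.exists_eq_add_one_of_ne_zero (Nat.ne_zero_of_lt hkn)
    rw [sum_range_succ', Nat.choose_succ_succ' (k + 1 + j), add_comm]
    simp only [Nat.add_sub_add_right, Nat.sub_zero, ih (Nat.le_of_succ_le_succ hkn)]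
    congr 2
    ring

theorem sum_range_sum_range_sub {k n : ℕ} (hkn : k ≤ n) :
    ∑ c ∈ range n, ∑ d ∈ range n, (k - c - d) = (k + 2).choose 3 := by
  calc ∑ c ∈ range n, ∑ d ∈ range n, (k - c - d)
      = ∑ c ∈ range n, (k - c + 1).choose 2 := sum_congr rfl fun c _ ↦ by
        simpa using sum_range_sub_add_choose_succ 0 ((Nat.sub_le k c).trans hkn)
    _ = (k + 2).choose 3 := sum_range_sub_add_choose_succ 1 hkn

theorem choose_three_add_choose_three (n : ℕ) :
    (n + 2).choose 3 + (n + 1).choose 3 = n * (n + 1) * (2 * n + 1) / 6 := by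
  have six_mul_choose (N : ℕ) : 6 * N.choose 3 = N.descFactorial 3 :=
    (Nat.descFactorial_eq_factorial_mul_choose N 3).symm
  refine (Nat.div_eq_of_eq_mul_right (by norm_num) ?_).symm
  rw [mul_add 6, six_mul_choose, six_mul_choose]
  cases n with
  | zero => rfl
  | succ n =>
    simp only [Nat.descFactorial_succ, Nat.descFactorial_zero, Nat.reduceSubDiff, Nat.sub_zero,
      Nat.add_sub_cancel]
    ring

theorem suzuki_genus_sub_one (q0 : ℕ) :
    q0 * (2 * q0 ^ 2 - 1) - 1 = (q0 - 1) * (2 * q0 ^ 2 + 2 * q0 + 1) := by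
  cases q0 with
  | zero => rfl
  | succ n =>
    rw [show 2 * (n + 1) ^ 2 - 1 = 2 * n ^ 2 + 4 * n + 1 by grind, Nat.add_sub_cancel]
    exact Nat.sub_eq_of_eq_add (by ring)

theorem suzuki_poleOrder_le_iff {q0 q : ℕ} (hq0 : 0 < q0) (hq : q = 2 * q0 ^ 2) (a b c d : ℕ) :
    a * q + b * (q + q0) + c * (q + 2 * q0) + d * (q + 2 * q0 + 1) ≤ q0 * (q - 1) - 1 ↔
      a + (b + c + d) < q0 := by
  have hN : (q0 - 1) * (q + 2 * q0 + 1) ≤ q0 * (q - 1) - 1 := by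
    rw [hq, suzuki_genus_sub_one]
  have hG : q0 * (q - 1) - 1 < (q0 - 1 + 1) * q := by
    have : 0 < q0 * q := by subst hq; positivity
    rw [Nat.sub_add_cancel hq0, Nat.mul_sub]
    omega
  have degree_iff := sum_mul_le_iff_sum_le (s := univ) (x := ![a, b, c, d])
    (w := ![q, q + q0, q + 2 * q0, q + 2 * q0 + 1])
    (fun i _ ↦ by fin_cases i <;> simp +arith)
    (fun i _ ↦ by fin_cases i <;> simp +arith) hN hG
  simp only [Fin.sum_univ_four, Matrix.cons_val] at degree_iff
  rw [degree_iff]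
  omega

theorem suzuki_a_number_count_general
    (q0 q g : ℕ) (hq0 : 0 < q0) (hq : q = 2 * q0 ^ 2) (hg : g = q0 * (q - 1)) :
    {x : ℕ × ℕ × ℕ × ℕ | x.2.1 ≤ 1 ∧ x.2.2.1 ≤ q0 - 1 ∧ x.2.2.2 ≤ q0 - 1 ∧
      x.1 * q + x.2.1 * (q + q0) + x.2.2.1 * (q + 2 * q0) + x.2.2.2 * (q + 2 * q0 + 1) ≤
        g - 1}.ncard = q0 * (q0 + 1) * (2 * q0 + 1) / 6 := by
  let box : Finset (ℕ × ℕ × ℕ) := range 2 ×ˢ range q0 ×ˢ range q0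
  calc _ = {x : ℕ × ℕ × ℕ × ℕ | x.2 ∈ box ∧ x.1 + (x.2.1 + x.2.2.1 + x.2.2.2) < q0}.ncard := by
        congr 1
        ext ⟨a, b, c, d⟩
        simp only [Set.mem_ofPred_eq, hg, suzuki_poleOrder_le_iff hq0 hq, box, mem_product,
          mem_range]
        omega
    _ = ∑ y ∈ box, (q0 - (y.1 + y.2.1 + y.2.2)) :=
        ncard_setOf_mem_and_add_lt box (fun y ↦ y.1 + y.2.1 + y.2.2) q0
    _ = ∑ b ∈ range 2, ∑ c ∈ range q0, ∑ d ∈ range q0, (q0 - b - c - d) := by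
        simp only [box, sum_product, Nat.sub_sub]
    _ = ∑ b ∈ range 2, (q0 - b + 2).choose 3 :=
        sum_congr rfl fun b _ ↦ sum_range_sum_range_sub (Nat.sub_le q0 b)
    _ = (q0 + 2).choose 3 + (q0 + 1).choose 3 := by
        rw [sum_range_succ, sum_range_one, Nat.sub_zero, show q0 - 1 + 2 = q0 + 1 by omega]
    _ = q0 * (q0 + 1) * (2 * q0 + 1) / 6 := choose_three_add_choose_three q0

theorem suzuki_a_number_count
    (m : ℕ) (hm : 1 ≤ m) (q0 q g : ℕ)
    (hq0 : q0 = 2 ^ m) (hq : q = 2 ^ (2 * m + 1)) (hg : g = q0 * (q - 1)) :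
    {x : ℕ × ℕ × ℕ × ℕ | x.2.1 ≤ 1 ∧ x.2.2.1 ≤ q0 - 1 ∧ x.2.2.2 ≤ q0 - 1 ∧
      x.1 * q + x.2.1 * (q + q0) + x.2.2.1 * (q + 2 * q0) + x.2.2.2 * (q + 2 * q0 + 1) ≤
        g - 1}.ncard = q0 * (q0 + 1) * (2 * q0 + 1) / 6 :=
  suzuki_a_number_count_general q0 q g (hq0 ▸ Nat.two_pow_pos m) (by rw [hq, hq0]; ring) hg
end

section
/- Let m be a positive integer, q0 = 2^m, q = 2^(2m+1), a = q0·(q0+1)·(2q0+1)/6, and g = q0·(q-1). Then, as rational numbers, 1/6 < a/g < 1/6 + 1/2^(m+1). -/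
/-!
Since `q = 2 * q₀ ^ 2`, the ratio is exactly `1 / 6 + (3 * q₀ + 2) / (6 * (q - 1))`. The second
summand is positive and asymptotic to `1 / (4 * q₀)`; from `q₀ = 2` on it is already below
`1 / (2 * q₀)`.
-/

theorem a_number_div_genus_eq {K : Type*} [Field K] [CharZero K] {q₀ : K}
    (hq₀ : q₀ ≠ 0) (hq : 2 * q₀ ^ 2 - 1 ≠ 0) :
    q₀ * (q₀ + 1) * (2 * q₀ + 1) / 6 / (q₀ * (2 * q₀ ^ 2 - 1)) =
      1 / 6 + (3 * q₀ + 2) / (6 * (2 * q₀ ^ 2 - 1)) := by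
  rw [div_div, div_add_div _ _ (by norm_num) (mul_ne_zero (by norm_num) hq),
    div_eq_div_iff (by simp [hq₀, hq]) (by simp [hq])]
  ring

section LinearOrderedField

variable {K : Type*} [Field K] [LinearOrder K] [IsStrictOrderedRing K] {q₀ : K}

theorem one_sixth_lt_a_number_div_genus (hq₀ : 0 < q₀) (hq : 1 < 2 * q₀ ^ 2) :
    1 / 6 < q₀ * (q₀ + 1) * (2 * q₀ + 1) / 6 / (q₀ * (2 * q₀ ^ 2 - 1)) := by
  have hq_sub : 0 < 2 * q₀ ^ 2 - 1 := sub_pos.mpr hq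
  rw [a_number_div_genus_eq hq₀.ne' hq_sub.ne']
  exact lt_add_of_pos_right _ (by positivity)

-- `h` is `(3 * q₀ + 2) / (6 * (2 * q₀ ^ 2 - 1)) < 1 / (2 * q₀)` with denominators cleared.
theorem a_number_div_genus_lt (hq₀ : 0 < q₀) (h : 2 * q₀ + 3 < 3 * q₀ ^ 2) :
    q₀ * (q₀ + 1) * (2 * q₀ + 1) / 6 / (q₀ * (2 * q₀ ^ 2 - 1)) < 1 / 6 + 1 / (2 * q₀) := by
  have hq_sub : 0 < 2 * q₀ ^ 2 - 1 := by linarith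
  rw [a_number_div_genus_eq hq₀.ne' hq_sub.ne', add_lt_add_iff_left,
    div_lt_div_iff₀ (by positivity) (by positivity)]
  linarith

theorem suzuki_a_number_ratio_general {q a g : K} (hq₀ : 0 < q₀)
    (h : 2 * q₀ + 3 < 3 * q₀ ^ 2) (hq : q = 2 * q₀ ^ 2)
    (ha : a = q₀ * (q₀ + 1) * (2 * q₀ + 1) / 6) (hg : g = q₀ * (q - 1)) :
    1 / 6 < a / g ∧ a / g < 1 / 6 + 1 / (2 * q₀) := by
  subst hq ha hg
  exact ⟨one_sixth_lt_a_number_div_genus hq₀ (by linarith), a_number_div_genus_lt hq₀ h⟩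

end LinearOrderedField

theorem suzuki_a_number_ratio
    (m : ℕ) (hm : 1 ≤ m) (q0 q : ℕ)
    (hq0 : q0 = 2 ^ m) (hq : q = 2 ^ (2 * m + 1))
    (a g : ℚ)
    (ha : a = (q0 * (q0 + 1) * (2 * q0 + 1) : ℚ) / 6)
    (hg : g = (q0 : ℚ) * ((q : ℚ) - 1)) :
    1 / 6 < a / g ∧ a / g < 1 / 6 + 1 / 2 ^ (m + 1) := by
  have two_le_q0 : (2 : ℚ) ≤ q0 := by
    exact_mod_cast hq0 ▸ Nat.le_self_pow (Nat.one_le_iff_ne_zero.mp hm) 2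
  have q_eq : (q : ℚ) = 2 * (q0 : ℚ) ^ 2 := by
    rw [hq, hq0]; push_cast; ring
  have two_pow_eq : (2 : ℚ) ^ (m + 1) = 2 * q0 := by
    rw [hq0, pow_succ']; push_cast; rfl
  rw [two_pow_eq]
  exact suzuki_a_number_ratio_general (by linarith) (by nlinarith) q_eq ha hg
end

section
/- Let m be a positive integer, q0 = 2^m, q = 2^(2m+1). Let R be a commutative ring of characteristic 2 and let y, z ∈ R satisfy z^q + z = y^(q0+q) + y^(q0+1). Define h1 = z^(2q0) + y^(2q0+1) and h2 = z^(2q0)·y + h1^(2q0). Then z² = y·h1 + h2. -/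
/-!
The curve equation reads `z ^ q - z = y ^ q0 * (y ^ q - y)`. Since `q = q0 * (2 * q0)` and the
`q0`-th power is additive, it says precisely that `h1 ^ q0 = z - y ^ (q0 + 1)`: the function `h1`
is a twisted `q0`-th root of `z`. Squaring this and substituting
`y ^ (2 * q0 + 1) = z ^ (2 * q0) - h1` gives the relation. Nothing here is special to characteristic
two: in characteristic three the same computation applies to the first equation of the Ree curve.
-/

section ExpChar

variable {R : Type*} [CommRing R] {p : ℕ} [ExpChar R p] {m q0 : ℕ} {y z : R}

theorem sub_pow_eq_of_pow_sub_eq (hq0 : q0 = p ^ m) (s : ℕ)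
    (hyz : z ^ (s * q0) - z = y ^ q0 * (y ^ (s * q0) - y)) :
    (z ^ s - y ^ (s + 1)) ^ q0 = z - y ^ (q0 + 1) :=
  calc (z ^ s - y ^ (s + 1)) ^ q0
      = (z ^ s) ^ q0 - (y ^ (s + 1)) ^ q0 := by rw [hq0, sub_pow_expChar_pow]
    _ = z ^ (s * q0) - y ^ (s * q0) * y ^ q0 := by ring
    _ = z - y ^ (q0 + 1) := by linear_combination hyz

theorem suzuki_relation_z_sq_general {q : ℕ} (hq0 : q0 = p ^ m) (hq : q = p ^ (2 * m + 1))
    (hyz : z ^ q - z = y ^ q0 * (y ^ q - y)) {h1 h2 : R}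
    (hh1 : h1 = z ^ (p * q0) - y ^ (p * q0 + 1))
    (hh2 : h2 = z ^ (p * q0) * y ^ (p - 1) + h1 ^ (p * q0)) :
    z ^ p = h2 - y ^ (p - 1) * h1 := by
  have hq_mul : q = p * q0 * q0 := by rw [hq, hq0]; ring
  have h1_pow : h1 ^ q0 = z - y ^ (q0 + 1) := by
    rw [hh1]
    exact sub_pow_eq_of_pow_sub_eq hq0 (p * q0) (hq_mul ▸ hyz)
  have h1_pow_mul : h1 ^ (p * q0) = z ^ p - (y ^ (q0 + 1)) ^ p := by
    rw [mul_comm, pow_mul, h1_pow, sub_pow_expChar]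
  have y_pow : (y ^ (q0 + 1)) ^ p = y ^ (p - 1) * y ^ (p * q0 + 1) := by
    have : 0 < p := expChar_pos R p
    rw [← pow_mul, ← pow_add]
    congr 1
    lia
  linear_combination -hh2 - h1_pow_mul + y_pow + y ^ (p - 1) * hh1

end ExpChar

theorem suzuki_relation_z_sq
    (m : ℕ) (hm : 1 ≤ m) (q0 q : ℕ)
    (hq0 : q0 = 2 ^ m) (hq : q = 2 ^ (2 * m + 1))
    (R : Type*) [CommRing R] [CharP R 2] (y z : R)
    (hyz : z ^ q + z = y ^ (q0 + q) + y ^ (q0 + 1))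
    (h1 h2 : R)
    (hh1 : h1 = z ^ (2 * q0) + y ^ (2 * q0 + 1))
    (hh2 : h2 = z ^ (2 * q0) * y + h1 ^ (2 * q0)) :
    z ^ 2 = y * h1 + h2 := by
  simpa [CharTwo.sub_eq_add, add_comm] using
    suzuki_relation_z_sq_general (p := 2) (y := y) (z := z) (h1 := h1) (h2 := h2) hq0 hq
      (by simpa [CharTwo.sub_eq_add, mul_add, pow_add] using hyz)
      (by rwa [CharTwo.sub_eq_add]) (by rwa [pow_one])
end

section
/- Let m be a positive integer, q0 = 2^m, q = 2^(2m+1). Let R be a commutative ring of characteristic 2 and let y, z ∈ R satisfy z^q + z = y^(q0+q) + y^(q0+1). Define h1 = z^(2q0) + y^(2q0+1). Then h1^(q0) = z + y^(q0+1). -/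
/-- The Suzuki curve is the case `p = 2`, `r = 2 * q0`. For `p = 3`, `r = 3 * q0` the hypothesis
`hyz` is the first of the two equations of the Ree curve. -/
theorem suzuki_relation_h1_general {R : Type*} [CommRing R] (p m r : ℕ) [ExpChar R p]
    {q0 q : ℕ} (hq0 : q0 = p ^ m) (hq : q = r * q0) {y z : R}
    (hyz : z ^ q - z = y ^ (q0 + q) - y ^ (q0 + 1)) :
    (z ^ r - y ^ (r + 1)) ^ q0 = z - y ^ (q0 + 1) := by
  have hexp : (r + 1) * q0 = q0 + q := by rw [hq]; ring
  calc (z ^ r - y ^ (r + 1)) ^ q0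
      = (z ^ r) ^ q0 - (y ^ (r + 1)) ^ q0 := by rw [hq0, sub_pow_expChar_pow]
    _ = z ^ q - y ^ (q0 + q) := by rw [← pow_mul, ← pow_mul, ← hq, hexp]
    _ = z - y ^ (q0 + 1) := by linear_combination hyz

theorem suzuki_relation_h1
    (m : ℕ) (hm : 1 ≤ m) (q0 q : ℕ)
    (hq0 : q0 = 2 ^ m) (hq : q = 2 ^ (2 * m + 1))
    (R : Type*) [CommRing R] [CharP R 2] (y z : R)
    (hyz : z ^ q + z = y ^ (q0 + q) + y ^ (q0 + 1))
    (h1 : R)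
    (hh1 : h1 = z ^ (2 * q0) + y ^ (2 * q0 + 1)) :
    h1 ^ q0 = z + y ^ (q0 + 1) := by
  have hq_mul : q = 2 * q0 * q0 := by rw [hq, hq0]; ring
  simp only [← CharTwo.sub_eq_add] at hyz hh1 ⊢
  exact hh1 ▸ suzuki_relation_h1_general 2 m (2 * q0) hq0 hq_mul hyz
end

section
/- Let m be a positive integer, q0 = 2^m, q = 2^(2m+1). Let R be a commutative ring of characteristic 2 and let y, z ∈ R satisfy z^q + z = y^(q0+q) + y^(q0+1). Define h1 = z^(2q0) + y^(2q0+1) and h2 = z^(2q0)·y + h1^(2q0). Then h2^(q0) = h1 + z·y^(q0). -/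
/-!
Let `φ`, `θ` be commuting ring endomorphisms and suppose that
`φ (θ z) - z = φ y * (φ (θ y) - y)`. Put `h₁ = θ z - y * θ y` and `h₂ = θ z * y - θ h₁`.
Applying `θ` to the equation of the curve computes `φ (θ h₁)`, and applying `φ` to `h₂` then gives
`φ h₂ = z * φ y - h₁ + (φ y ^ 2 + θ y) * (φ (θ y) - y)`. On the Suzuki curve `φ x = x ^ q₀` and
`θ x = φ x ^ 2`, so the correction term has the factor `2 * φ y ^ 2`, which vanishes in
characteristic two.
-/

section CommutingEndomorphisms

variable {R : Type*} [CommRing R] {φ θ : R →+* R} {y z : R}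

/-- The auxiliary function `h₁` of the Suzuki curve, with an arbitrary endomorphism `θ` in place of
`x ↦ x ^ (2 * q₀)`; the sign is immaterial in characteristic two. -/
def suzukiH1 (θ : R →+* R) (y z : R) : R :=
  θ z - y * θ y

/-- The auxiliary function `h₂` of the Suzuki curve, with the same conventions as `suzukiH1`. -/
def suzukiH2 (θ : R →+* R) (y z : R) : R :=
  θ z * y - θ (suzukiH1 θ y z)

theorem map_map_suzukiH1_sub_self (hcomm : Function.Commute φ θ)
    (hyz : φ (θ z) - z = φ y * (φ (θ y) - y)) :
    φ (θ (suzukiH1 θ y z)) - suzukiH1 θ y z = -(θ y * (φ (θ y) - y)) := by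
  have hθ : θ (φ (θ z)) - θ z = φ (θ y) * (θ (φ (θ y)) - θ y) := by
    simpa only [map_sub, map_mul, ← hcomm y] using congrArg θ hyz
  simp only [suzukiH1, map_sub, map_mul, hcomm (θ z), hcomm (θ y)]
  linear_combination hθ

theorem map_suzukiH2_add_suzukiH1 (hcomm : Function.Commute φ θ)
    (hyz : φ (θ z) - z = φ y * (φ (θ y) - y)) :
    φ (suzukiH2 θ y z) + suzukiH1 θ y z = z * φ y + (φ y ^ 2 + θ y) * (φ (θ y) - y) := by
  have hφ : φ (suzukiH2 θ y z) = φ (θ z) * φ y - φ (θ (suzukiH1 θ y z)) := by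
    rw [suzukiH2, map_sub, map_mul]
  linear_combination hφ + φ y * hyz - map_map_suzukiH1_sub_self hcomm hyz

end CommutingEndomorphisms

theorem suzuki_relation_h2_general {R : Type*} [CommRing R] [CharP R 2] (φ : R →+* R)
    {y z h₁ h₂ : R}
    (hyz : φ (φ z) ^ 2 + z = φ y * (φ (φ y) ^ 2 + y))
    (hh₁ : h₁ = φ z ^ 2 + y * φ y ^ 2)
    (hh₂ : h₂ = φ z ^ 2 * y + φ h₁ ^ 2) :
    φ h₂ = h₁ + z * φ y := by
  let θ : R →+* R := (frobenius R 2).comp φ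
  have hθ (x : R) : θ x = φ x ^ 2 := rfl
  have hcomm : Function.Commute φ θ := fun x ↦ map_pow φ (φ x) 2
  have hcurve : φ (θ z) - z = φ y * (φ (θ y) - y) := by
    simpa only [hθ, map_pow, CharTwo.sub_eq_add] using hyz
  have hH1 : suzukiH1 θ y z = h₁ := by
    rw [suzukiH1, CharTwo.sub_eq_add, hθ, hθ, hh₁]
  have hH2 : suzukiH2 θ y z = h₂ := by
    rw [suzukiH2, hH1, CharTwo.sub_eq_add, hθ, hθ, hh₂]
  have hcorrection : φ y ^ 2 + θ y = 0 := by rw [hθ, CharTwo.add_self_eq_zero]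
  have hsum : φ h₂ + h₁ = z * φ y := by
    simpa only [hH1, hH2, hcorrection, zero_mul, add_zero]
      using map_suzukiH2_add_suzukiH1 hcomm hcurve
  rwa [CharTwo.add_eq_iff_eq_add, add_comm] at hsum

theorem suzuki_relation_h2
    (m : ℕ) (hm : 1 ≤ m) (q0 q : ℕ)
    (hq0 : q0 = 2 ^ m) (hq : q = 2 ^ (2 * m + 1))
    (R : Type*) [CommRing R] [CharP R 2] (y z : R)
    (hyz : z ^ q + z = y ^ (q0 + q) + y ^ (q0 + 1))
    (h1 h2 : R)
    (hh1 : h1 = z ^ (2 * q0) + y ^ (2 * q0 + 1))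
    (hh2 : h2 = z ^ (2 * q0) * y + h1 ^ (2 * q0)) :
    h2 ^ q0 = h1 + z * y ^ q0 := by
  have hφ (x : R) : iterateFrobenius R 2 m x = x ^ q0 := by rw [iterateFrobenius_def, hq0]
  have hq' : q = q0 * q0 * 2 := by rw [hq, hq0]; ring
  rw [← hφ h2, ← hφ y]
  apply suzuki_relation_h2_general <;> simp only [hφ]
  · linear_combination (norm := (rw [hq']; ring)) hyz
  · linear_combination hh1
  · linear_combination hh2
end

section
/- Let m be a positive integer, q0 = 2^m, q = 2^(2m+1), and let K be the finite field with q² elements. Then the set {y ∈ K : (y^(q0+q) + y^(q0+1))^q = y^(q0+q) + y^(q0+1)} equals the set {y ∈ K : y^q = y}; in particular it has exactly q elements. -/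
/-!
Put `σ y = y ^ q` and `t = y ^ q0 * (σ y + y)`, which is `y ^ (q0 + q) + y ^ (q0 + 1)`. On a field
with `q ^ 2` elements `σ` is an involution, so it fixes `σ y + y`; as `q0` is a power of the
characteristic, `σ t - t = (σ y - y) ^ q0 * (σ y + y)`. In characteristic two the right-hand side is
`(σ y - y) ^ (q0 + 1)`, hence `t` is fixed by `σ` exactly when `y` is. The fixed points of `σ` are
the roots of `X ^ q - X`, which divides `X ^ (q ^ 2) - X`, the product of all `X - a`.
-/

open Polynomial

section Involution

variable {R : Type*} [CommRing R] {σ : R →+* R} {y : R}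

theorem map_pow_mul_map_add_self_sub (p : ℕ) [ExpChar R p] (hσ : σ (σ y) = y) (k : ℕ) :
    σ (y ^ p ^ k * (σ y + y)) - y ^ p ^ k * (σ y + y) = (σ y - y) ^ p ^ k * (σ y + y) := by
  rw [sub_pow_expChar_pow, map_mul, map_pow, map_add, hσ]
  ring

theorem map_two_pow_mul_map_add_self_eq_self_iff [IsReduced R] [CharP R 2]
    (hσ : σ (σ y) = y) (k : ℕ) :
    σ (y ^ 2 ^ k * (σ y + y)) = y ^ 2 ^ k * (σ y + y) ↔ σ y = y := by
  rw [← sub_eq_zero, map_pow_mul_map_add_self_sub 2 hσ, ← CharTwo.sub_eq_add, ← pow_succ,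
    pow_eq_zero_iff (Nat.succ_ne_zero _), sub_eq_zero]

end Involution

section FiniteField

variable {K : Type*} [Field K]

theorem ncard_rootSet_eq_natDegree_of_dvd_X_pow_card_sub_X [Finite K] {f : K[X]}
    (hf : f ∣ X ^ Nat.card K - X) : (f.rootSet K).ncard = f.natDegree := by
  classical
  have := Fintype.ofFinite K
  have hne : (X ^ Nat.card K - X : K[X]) ≠ 0 :=
    FiniteField.X_pow_card_sub_X_ne_zero K Finite.one_lt_card
  have hsplits : f.Splits := splits_X_pow_nat_card_sub_X.of_dvd hne hf
  have hnodup : f.roots.Nodup := by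
    refine Multiset.nodup_of_le (roots.le_of_dvd hne hf) ?_
    rw [Nat.card_eq_fintype_card, FiniteField.roots_X_pow_card_sub_X]
    exact Finset.univ.nodup
  rw [rootSet_def, Set.ncard_coe_finset, aroots_def, Algebra.algebraMap_self, Polynomial.map_id,
    Multiset.toFinset_card_of_nodup hnodup, hsplits.natDegree_eq_card_roots]

theorem ncard_setOf_pow_eq_self_of_card_eq_pow [Finite K] {q e : ℕ} (hK : Nat.card K = q ^ e) :
    {y : K | y ^ q = y}.ncard = q := by
  have hq : 1 < q := lt_of_pow_lt_pow_left' e (by simpa [← hK] using Finite.one_lt_card (α := K))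
  have hdvd : (X ^ q - X : K[X]) ∣ X ^ Nat.card K - X := by
    simpa [hK] using dvd_pow_pow_sub_self_of_dvd (r := (X : K[X])) (p := q) (one_dvd e)
  have hroots : {y : K | y ^ q = y} = (X ^ q - X : K[X]).rootSet K := by
    ext y
    simp [mem_rootSet_of_ne (FiniteField.X_pow_card_sub_X_ne_zero K hq), sub_eq_zero]
  rw [hroots, ncard_rootSet_eq_natDegree_of_dvd_X_pow_card_sub_X hdvd,
    FiniteField.X_pow_card_sub_X_natDegree_eq K hq]

theorem suzuki_fiber_condition_general {q0 q k n : ℕ} (hq0 : q0 = 2 ^ k) (hq : q = 2 ^ n)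
    (hK : Nat.card K = q ^ 2) :
    {y : K | (y ^ (q0 + q) + y ^ (q0 + 1)) ^ q = y ^ (q0 + q) + y ^ (q0 + 1)} =
      {y : K | y ^ q = y} ∧
    {y : K | (y ^ (q0 + q) + y ^ (q0 + 1)) ^ q = y ^ (q0 + q) + y ^ (q0 + 1)}.ncard = q := by
  have : Finite K := Nat.finite_of_card_ne_zero (by simp [hK, hq])
  have := Fintype.ofFinite K
  have : CharP K 2 := charP_of_card_eq_prime_pow (f := n * 2) (by
    rw [Fintype.card_eq_nat_card, hK, hq, pow_mul])
  have hfiber : {y : K | (y ^ (q0 + q) + y ^ (q0 + 1)) ^ q = y ^ (q0 + q) + y ^ (q0 + 1)} =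
      {y : K | y ^ q = y} := by
    ext y
    have hinv : (y ^ q) ^ q = y := by
      rw [← pow_mul, ← sq, ← hK, Nat.card_eq_fintype_card, FiniteField.pow_card]
    have hfactor : y ^ (q0 + q) + y ^ (q0 + 1) = y ^ q0 * (y ^ q + y) := by ring
    subst hq0 hq
    rw [Set.mem_ofPred_eq, Set.mem_ofPred_eq, hfactor]
    exact map_two_pow_mul_map_add_self_eq_self_iff (σ := iterateFrobenius K 2 n) hinv k
  exact ⟨hfiber, hfiber ▸ ncard_setOf_pow_eq_self_of_card_eq_pow hK⟩

end FiniteField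

theorem suzuki_fiber_condition
    (m : ℕ) (hm : 1 ≤ m) (q0 q : ℕ)
    (hq0 : q0 = 2 ^ m) (hq : q = 2 ^ (2 * m + 1)) :
    {y : GaloisField 2 (2 * (2 * m + 1)) |
        (y ^ (q0 + q) + y ^ (q0 + 1)) ^ q = y ^ (q0 + q) + y ^ (q0 + 1)} =
      {y : GaloisField 2 (2 * (2 * m + 1)) | y ^ q = y} ∧
    {y : GaloisField 2 (2 * (2 * m + 1)) |
        (y ^ (q0 + q) + y ^ (q0 + 1)) ^ q = y ^ (q0 + q) + y ^ (q0 + 1)}.ncard = q :=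
  suzuki_fiber_condition_general hq0 hq (by
    rw [GaloisField.card 2 _ (by lia), hq, ← pow_mul, mul_comm])
end

section
/- Let m be a positive integer, q0 = 2^m, q = 2^(2m+1), and let K be the finite field with q² elements. Then the number of pairs (y,z) ∈ K × K satisfying z^q + z = y^(q0+q) + y^(q0+1) equals q². -/
/-!
The equation reads `T z = y ^ q0 * T y`, where `T x = x ^ q + x` is the trace from `𝔽_{q²}` to
`𝔽_q`. If `T y ≠ 0`, then `y ^ q0` is a quotient of two elements of `𝔽_q`, so `y ^ (q - 1)` has
order dividing both `q0` and `q + 1`. These are coprime, hence `y ∈ 𝔽_q`. But in characteristic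
two `T` vanishes exactly on `𝔽_q`, a contradiction. So `T y = 0`, hence `T z = 0`, and the affine
points are the pairs in `𝔽_q × 𝔽_q`.
-/

open Polynomial

theorem pow_sub_self_dvd_pow_pow_sub_self {R : Type*} [CommRing R] (x : R) (q k : ℕ) :
    x ^ q - x ∣ x ^ q ^ k - x := by
  induction k with
  | zero => simp
  | succ k ih =>
    have hstep : x ^ q ^ k - x ∣ x ^ q ^ (k + 1) - x ^ q := by
      rw [pow_succ, pow_mul]
      exact sub_dvd_pow_sub_pow _ _ q
    exact sub_add_sub_cancel (x ^ q ^ (k + 1)) (x ^ q) x ▸ dvd_add (ih.trans hstep) dvd_rfl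

section FiniteField

variable {K : Type*} [Field K] [Finite K] {q : ℕ}

theorem add_pow_of_dvd_natCard (hq : q ∣ Nat.card K) (x y : K) :
    (x + y) ^ q = x ^ q + y ^ q := by
  have := Fintype.ofFinite K
  obtain ⟨p, _, n, hp, hcard⟩ := FiniteField.card' K
  have : Fact p.Prime := ⟨hp⟩
  rw [Nat.card_eq_fintype_card, hcard] at hq
  obtain ⟨j, -, rfl⟩ := (Nat.dvd_prime_pow hp).1 hq
  exact add_pow_char_pow x y p j

theorem ncard_setOf_pow_eq_self {k : ℕ} (hK : Nat.card K = q ^ k) :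
    {x : K | x ^ q = x}.ncard = q := by
  classical
  have := Fintype.ofFinite K
  have hq : 1 < q := by
    by_contra! hq
    exact (hK ▸ Finite.one_lt_card (α := K)).not_ge (pow_le_one' hq k)
  have hcard : q ^ k = Fintype.card K := by rw [← hK, Nat.card_eq_fintype_card]
  have hne : (X ^ q - X : K[X]) ≠ 0 := FiniteField.X_pow_card_sub_X_ne_zero K hq
  have hne' : (X ^ q ^ k - X : K[X]) ≠ 0 :=
    FiniteField.X_pow_card_sub_X_ne_zero K (hcard ▸ Fintype.one_lt_card)
  have hdvd : (X ^ q - X : K[X]) ∣ X ^ q ^ k - X := pow_sub_self_dvd_pow_pow_sub_self X q k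
  have hroots : (X ^ q ^ k - X : K[X]).roots = Finset.univ.val := by
    rw [hcard, FiniteField.roots_X_pow_card_sub_X]
  have hnodup : (X ^ q - X : K[X]).roots.Nodup :=
    Multiset.nodup_of_le (roots.le_of_dvd hne' hdvd) (hroots ▸ Finset.univ.nodup)
  have hsplits : (X ^ q ^ k - X : K[X]).Splits := by
    rw [splits_iff_card_roots, hroots, hcard,
      FiniteField.X_pow_card_sub_X_natDegree_eq K Fintype.one_lt_card]
    rfl
  calc {x : K | x ^ q = x}.ncard
      = ((X ^ q - X : K[X]).roots.toFinset : Set K).ncard := by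
        congr 1
        ext x
        simp [hne, sub_eq_zero]
    _ = (X ^ q - X : K[X]).roots.card := by
        rw [Set.ncard_coe_finset, Multiset.toFinset_card_of_nodup hnodup]
    _ = (X ^ q - X : K[X]).natDegree := (hsplits.of_dvd hne' hdvd).natDegree_eq_card_roots.symm
    _ = q := FiniteField.X_pow_card_sub_X_natDegree_eq K hq

theorem pow_pow_eq_self_of_natCard_eq_sq (hK : Nat.card K = q ^ 2) (x : K) :
    (x ^ q) ^ q = x := by
  have := Fintype.ofFinite K
  rw [← pow_mul, ← sq, ← hK, Nat.card_eq_fintype_card, FiniteField.pow_card]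

theorem pow_add_self_pow_of_natCard_eq_sq (hK : Nat.card K = q ^ 2) (x : K) :
    (x ^ q + x) ^ q = x ^ q + x := by
  rw [add_pow_of_dvd_natCard (hK ▸ dvd_pow_self q two_ne_zero),
    pow_pow_eq_self_of_natCard_eq_sq hK, add_comm]

theorem pow_eq_self_of_coprime_of_pow_pow_eq {s : ℕ} (hK : Nat.card K = q ^ 2)
    (hs : s.Coprime (q + 1)) {x : K} (hx : (x ^ s) ^ q = x ^ s) : x ^ q = x := by
  rcases eq_or_ne x 0 with rfl | hx0
  · have hq : q ≠ 0 := by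
      rintro rfl
      exact Nat.card_pos.ne' hK
    exact zero_pow hq
  have hpow : (x ^ q / x) ^ s = 1 := by
    rw [div_pow, pow_right_comm, hx, div_self (pow_ne_zero s hx0)]
  have hnorm : (x ^ q / x) ^ (q + 1) = 1 := by
    rw [pow_succ, div_pow, pow_pow_eq_self_of_natCard_eq_sq hK,
      div_mul_div_cancel₀' hx0, div_self (pow_ne_zero q hx0)]
  have hone : (x ^ q / x) ^ s.gcd (q + 1) = 1 := pow_gcd_eq_one.2 ⟨hpow, hnorm⟩
  rwa [hs.gcd_eq_one, pow_one, div_eq_one_iff_eq hx0] at hone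

theorem suzuki_equation_iff [CharP K 2] {q0 : ℕ} (hK : Nat.card K = q ^ 2)
    (hq0 : q0.Coprime (q + 1)) {y z : K} :
    z ^ q + z = y ^ (q0 + q) + y ^ (q0 + 1) ↔ y ^ q = y ∧ z ^ q = z := by
  have hfactor : y ^ (q0 + q) + y ^ (q0 + 1) = y ^ q0 * (y ^ q + y) := by ring
  rw [hfactor]
  constructor
  · intro h
    have hy : y ^ q = y := by
      by_contra hne
      have htrace : y ^ q + y ≠ 0 := mt CharTwo.add_eq_zero.1 hne
      have hprod : (y ^ q0) ^ q * (y ^ q + y) = y ^ q0 * (y ^ q + y) := by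
        have hz := pow_add_self_pow_of_natCard_eq_sq hK z
        rwa [h, mul_pow, pow_add_self_pow_of_natCard_eq_sq hK y] at hz
      exact hne (pow_eq_self_of_coprime_of_pow_pow_eq hK hq0 (mul_right_cancel₀ htrace hprod))
    rw [hy, CharTwo.add_self_eq_zero, mul_zero] at h
    exact ⟨hy, CharTwo.add_eq_zero.1 h⟩
  · rintro ⟨hy, hz⟩
    rw [hy, hz, CharTwo.add_self_eq_zero, CharTwo.add_self_eq_zero, mul_zero]

theorem suzuki_points_q_squared_general [CharP K 2] {q0 : ℕ} (hK : Nat.card K = q ^ 2)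
    (hq0 : q0.Coprime (q + 1)) :
    {p : K × K | p.2 ^ q + p.2 = p.1 ^ (q0 + q) + p.1 ^ (q0 + 1)}.ncard = q ^ 2 := by
  have hset : {p : K × K | p.2 ^ q + p.2 = p.1 ^ (q0 + q) + p.1 ^ (q0 + 1)} =
      {x : K | x ^ q = x} ×ˢ {x : K | x ^ q = x} :=
    Set.ext fun _ => suzuki_equation_iff hK hq0
  rw [hset, Set.ncard_prod, ncard_setOf_pow_eq_self hK, sq]

end FiniteField

theorem suzuki_points_q_squared
    (m : ℕ) (hm : 1 ≤ m) (q0 q : ℕ)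
    (hq0 : q0 = 2 ^ m) (hq : q = 2 ^ (2 * m + 1)) :
    {p : GaloisField 2 (2 * (2 * m + 1)) × GaloisField 2 (2 * (2 * m + 1)) |
        p.2 ^ q + p.2 = p.1 ^ (q0 + q) + p.1 ^ (q0 + 1)}.ncard = q ^ 2 := by
  subst hq0 hq
  have hK : Nat.card (GaloisField 2 (2 * (2 * m + 1))) = (2 ^ (2 * m + 1)) ^ 2 := by
    rw [GaloisField.card 2 _ (by lia), ← pow_mul, mul_comm]
  have hodd : Odd (2 ^ (2 * m + 1) + 1) :=
    (even_two.pow_of_ne_zero (2 * m).succ_ne_zero).add_one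
  exact suzuki_points_q_squared_general hK (hodd.coprime_two_left.pow_left m)
end

section
/- Let m be a positive integer, q0 = 2^m, q = 2^(2m+1), g = q0·(q-1), and let L be the finite field with q⁴ elements. Then the number of pairs (y,z) ∈ L × L satisfying z^q + z = y^(q0+q) + y^(q0+1) equals q⁴ + 2·q²·g. -/
/-!
Let `ψ` be the additive character `x ↦ (-1) ^ Tr x` of a field `K` of degree `4 * (2 * m + 1)`
over `𝔽₂`. Counting points with `ψ` leaves the sums `∑ y, ψ (c * y ^ q₀ * (y ^ q + y))` with `c` a
nonzero element of `𝔽_q`; all of them equal the sum `S K` with `c = 1`, by substituting `d * y` for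
`y` where `d ∈ 𝔽_q` satisfies `d ^ (q₀ + 1) = c`.

`S K` is the Gauss sum of a quadratic form over `𝔽₂`, so its square is `|K|` times the size of the
radical. The sign is found by descent along the fields `K` of degree `4 * n` with `n ∣ 2 * m + 1`.
If `[K : E] = p` is an odd prime, then the orbits of `Gal(K/E)` give `S K ≡ S E` modulo `p`, and
`2 ^ ((p - 1) / 2) ≡ (2 / p)` shows that the sign changes by this Legendre symbol. Over `𝔽₁₆`
the sum is `± ∑ y, ψ (y ^ 3)`, and `∑ y, ψ (y ^ 3)` is `± 8` and congruent to `1` modulo `3`,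
because the cube roots of unity act on `𝔽₁₆` fixing only `0`.
-/

open Finset Module

theorem sum_eq_sum_fixedPoints_of_isPGroup {G α R : Type*} [Group G] [MulAction G α] [Fintype α]
    [CommRing R] {p : ℕ} [Fact p.Prime] [CharP R p] (hG : IsPGroup p G)
    [DecidablePred (· ∈ MulAction.fixedPoints G α)] (F : α → R)
    (hF : ∀ (g : G) x, F (g • x) = F x) :
    ∑ x, F x = ∑ x with x ∈ MulAction.fixedPoints G α, F x := by
  classical
  rw [← sum_filter_add_sum_filter_not univ (· ∈ MulAction.fixedPoints G α), add_eq_left]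
  refine sum_cancels_of_partition_cancels (MulAction.orbitRel G α) fun x hx ↦ ?_
  replace hx : x ∉ MulAction.fixedPoints G α := (mem_filter.1 hx).2
  have orbit_eq : ({a ∈ ({a | a ∉ MulAction.fixedPoints G α} : Finset α) |
      MulAction.orbitRel G α a x}) = (MulAction.orbit G x).toFinset := by
    ext a
    simp only [Set.mem_toFinset, mem_filter, mem_univ, true_and, MulAction.orbitRel_apply,
      and_iff_right_iff_imp]
    rintro ⟨g, rfl⟩ h
    exact hx fun g' ↦ by simpa [mul_smul] using h (g * g' * g⁻¹)
  obtain ⟨n, hn⟩ := hG.card_orbit x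
  have hn0 : n ≠ 0 := by
    rintro rfl
    exact hx ((MulAction.mem_fixedPoints_iff_card_orbit_eq_one (M := G)).2
      (by rw [Fintype.card_eq_nat_card, hn, pow_zero]))
  have F_orbit : ∀ a ∈ (MulAction.orbit G x).toFinset, F a = F x := by
    intro a ha
    obtain ⟨g, rfl⟩ := Set.mem_toFinset.1 ha
    exact hF g x
  rw [orbit_eq, sum_congr rfl F_orbit, sum_const, Set.toFinset_card, Fintype.card_eq_nat_card, hn,
    nsmul_eq_mul, Nat.cast_pow, CharP.cast_eq_zero, zero_pow hn0, zero_mul]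

theorem sq_sum_eq_card_mul_sum_radical {G R : Type*} [AddCommGroup G] [Fintype G] [CommRing R]
    [IsDomain R] (χ : G → R) (B : G → AddChar G R) [DecidablePred (B · = 0)]
    (hB : ∀ x y, χ (x + y) * χ y = χ x * B x y) :
    (∑ x, χ x) ^ 2 = Fintype.card G * ∑ x with B x = 0, χ x := by
  calc (∑ x, χ x) ^ 2 = ∑ y, ∑ x, χ (x + y) * χ y := by
        rw [sq, Finset.mul_sum]
        refine sum_congr rfl fun y _ ↦ ?_
        rw [← sum_mul, Fintype.sum_equiv (Equiv.addRight y) (fun x ↦ χ (x + y)) χ fun _ ↦ rfl]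
    _ = ∑ x, χ x * ∑ y, B x y := by
        simp only [hB, mul_sum]
        exact sum_comm
    _ = Fintype.card G * ∑ x with B x = 0, χ x := by
        simp only [AddChar.sum_eq_ite, sum_filter, mul_sum, mul_ite, mul_zero, mul_comm]

theorem int_eq_of_sq_eq_sq_of_cast_eq {p : ℕ} {S T : ℤ} (hp : p ≠ 1)
    (hcop : IsCoprime (p : ℤ) (2 * T)) (hsq : S ^ 2 = T ^ 2) (hcast : (S : ZMod p) = T) :
    S = T := by
  refine (sq_eq_sq_iff_eq_or_eq_neg.1 hsq).resolve_right fun hneg ↦ hp ?_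
  have hdvd := (ZMod.intCast_eq_intCast_iff_dvd_sub _ _ _).1 hcast
  rw [hneg, sub_neg_eq_add, ← two_mul] at hdvd
  exact Int.isUnit_iff_natAbs_eq.1 (hcop.isUnit_of_dvd' dvd_rfl hdvd)

theorem χ₈_nat_sq_of_odd {n : ℕ} (hn : Odd n) : ZMod.χ₈ n ^ 2 = 1 := by
  rw [ZMod.χ₈_nat_eq_if_mod_eight, if_neg (Nat.not_even_iff_odd.2 hn ∘ Nat.even_iff.2)]
  split_ifs <;> rfl

theorem two_pow_half_eq_χ₈ {p : ℕ} [Fact p.Prime] (hp : p ≠ 2) :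
    (2 : ZMod p) ^ (p / 2) = (ZMod.χ₈ p : ℤ) := by
  rw [← legendreSym.at_two hp, legendreSym.eq_pow, Int.cast_ofNat]

theorem mem_range_algebraMap_iff_pow_card_eq {F L : Type*} [Field F] [Field L] [Algebra F L]
    [Finite L] {x : L} : x ∈ Set.range (algebraMap F L) ↔ x ^ Nat.card F = x := by
  have : Finite F := Finite.of_injective _ (algebraMap F L).injective
  have := Fintype.ofFinite F
  rw [IsGalois.mem_range_algebraMap_iff_fixed, Nat.card_eq_fintype_card]
  constructor
  · exact fun h ↦ h (FiniteField.frobeniusAlgEquivOfAlgebraic F L)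
  · intro h g
    obtain ⟨i, rfl⟩ := (FiniteField.bijective_frobeniusAlgEquivOfAlgebraic_pow F L).2 g
    rw [AlgEquiv.coe_pow]
    exact Function.IsFixedPt.iterate h i

theorem exists_intermediateField_finrank_eq (F L : Type*) [Field F] [Field L] [Algebra F L]
    [Finite L] {d : ℕ} (hd : d ∣ finrank F L) :
    ∃ E : IntermediateField F L, finrank F E = d := by
  have : Finite F := Finite.of_injective _ (algebraMap F L).injective
  obtain ⟨p, _⟩ := CharP.exists F
  have : Fact p.Prime := ⟨CharP.char_is_prime F p⟩
  have : NeZero d := ⟨ne_zero_of_dvd_ne_zero finrank_pos.ne' hd⟩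
  obtain ⟨φ⟩ := FiniteField.nonempty_algHom_of_finrank_dvd (F := F)
    (K := FiniteField.Extension F p d) (L := L) (by rwa [FiniteField.finrank_extension])
  exact ⟨φ.fieldRange, (AlgEquiv.ofInjectiveField φ).toLinearEquiv.finrank_eq.symm.trans
    (FiniteField.finrank_extension F p d)⟩

theorem ncard_pow_eq_self (F : Type*) {L : Type*} [Field F] [Field L] [Algebra F L] [Finite L]
    {d : ℕ} (hd : d ∣ finrank F L) : {x : L | x ^ Nat.card F ^ d = x}.ncard = Nat.card F ^ d := by
  obtain ⟨E, rfl⟩ := exists_intermediateField_finrank_eq F L hd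
  have hE : {x : L | x ^ Nat.card F ^ finrank F E = x} = Set.range (algebraMap E L) := by
    ext x
    rw [mem_range_algebraMap_iff_pow_card_eq, natCard_eq_pow_finrank (K := F) (V := E),
      Set.mem_ofPred_eq]
  rw [hE, Set.ncard_range_of_injective (algebraMap E L).injective, natCard_eq_pow_finrank (K := F)]

theorem exists_isPrimitiveRoot_of_dvd_card_sub_one {F : Type*} [Field F] [Finite F] {n : ℕ}
    (hn : n ∣ Nat.card F - 1) : ∃ ζ : F, IsPrimitiveRoot ζ n := by
  obtain ⟨g, hg⟩ := IsCyclic.exists_ofOrder_eq_natCard (α := Fˣ)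
  obtain ⟨d, hd⟩ := hn
  rw [Nat.card_units] at hg
  have hcard : 0 < Nat.card F - 1 := Nat.sub_pos_of_lt Finite.one_lt_card
  exact ⟨_, (hg ▸ IsPrimitiveRoot.coe_units_iff.2 (.orderOf g)).pow hcard (hd.trans (mul_comm n d))⟩

theorem sum_pow_prime_eq_apply_zero {F R : Type*} [Field F] [Fintype F] [CommRing R] {p : ℕ}
    [Fact p.Prime] [CharP R p] (hp : p ∣ Nat.card F - 1) (f : F → R) : ∑ y, f (y ^ p) = f 0 := by
  classical
  obtain ⟨ζ, hζ⟩ := exists_isPrimitiveRoot_of_dvd_card_sub_one hp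
  have hp' : p.Prime := Fact.out
  have hgroup : IsPGroup p (rootsOfUnity p F) :=
    .of_card (n := 1) (by rw [pow_one]; exact hζ.card_rootsOfUnity)
  have hinvariant (g : rootsOfUnity p F) (y : F) : (g • y) ^ p = y ^ p := by
    rw [Subgroup.smul_def, Units.smul_def, smul_eq_mul, mul_pow, (mem_rootsOfUnity' p _).1 g.2,
      one_mul]
  have hfixed : ({y | y ∈ MulAction.fixedPoints (rootsOfUnity p F) F} : Finset F) = {0} := by
    ext y
    simp only [mem_filter_univ, mem_singleton, MulAction.mem_fixedPoints]
    refine ⟨fun h ↦ ?_, fun h g ↦ by rw [h, smul_zero]⟩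
    by_contra hy
    exact hζ.ne_one hp'.one_lt ((mul_eq_right₀ hy).1 (h hζ.toRootsOfUnity))
  rw [sum_eq_sum_fixedPoints_of_isPGroup hgroup _ fun g y ↦ by rw [hinvariant], hfixed,
    sum_singleton, zero_pow hp'.ne_zero]

theorem isPeriodicPt_frobenius_iff {R : Type*} [CommSemiring R] {p : ℕ} [ExpChar R p] {k : ℕ}
    {x : R} : Function.IsPeriodicPt (frobenius R p) k x ↔ x ^ p ^ k = x := by
  rw [Function.IsPeriodicPt, Function.IsFixedPt, iterate_frobenius]

theorem pow_two_pow_odd_eq_add_one {R : Type*} [CommRing R] [CharP R 2] {w : R}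
    (hw : w ^ 2 = w + 1) {t : ℕ} (ht : Odd t) : w ^ 2 ^ t = w + 1 := by
  have h4 : w ^ 2 ^ 2 = w := by
    rw [pow_succ 2, pow_mul, pow_one, hw, CharTwo.add_sq, hw, one_pow, add_assoc,
      CharTwo.add_self_eq_zero, add_zero]
  obtain ⟨i, rfl⟩ := ht
  rw [pow_succ, pow_mul, isPeriodicPt_frobenius_iff.1
    ((isPeriodicPt_frobenius_iff.2 h4).mul_const i), hw]

section CharacteristicTwo

variable {K : Type*} [Field K] [Algebra (ZMod 2) K]

local instance charP_two_of_algebra : CharP K 2 :=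
  charP_of_injective_algebraMap' (ZMod 2) 2

/-- The character `x ↦ (-1) ^ Tr x` of the additive group of a field `K` of characteristic two,
where `Tr` is the absolute trace. It is integer-valued so that sums of its values can be reduced
modulo odd primes. -/
noncomputable def traceChar (K : Type*) [Field K] [Algebra (ZMod 2) K] : AddChar K ℤ :=
  (AddChar.zmodChar 2 (ζ := (-1 : ℤ)) (by norm_num)).compAddMonoidHom
    (Algebra.trace (ZMod 2) K).toAddMonoidHom

theorem traceChar_apply (x : K) :
    traceChar K x = (-1) ^ (Algebra.trace (ZMod 2) K x).val := rfl

theorem traceChar_mul_self (x : K) : traceChar K x * traceChar K x = 1 := by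
  rw [← AddChar.map_add_eq_mul, CharTwo.add_self_eq_zero, AddChar.map_zero_eq_one]

theorem traceChar_ringEquiv {L : Type*} [Field L] [Algebra (ZMod 2) L] (σ : K ≃+* L) (x : K) :
    traceChar L (σ x) = traceChar K x := by
  let σ' : K ≃ₐ[ZMod 2] L := .ofRingEquiv (f := σ) fun r ↦
    DFunLike.congr_fun (Subsingleton.elim ((σ : K →+* L).comp (algebraMap _ K)) (algebraMap _ L)) r
  rw [traceChar_apply, traceChar_apply, ← Algebra.trace_eq_of_algEquiv σ' x]
  rfl

theorem traceChar_pow_two_pow [Finite K] (k : ℕ) (x : K) :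
    traceChar K (x ^ 2 ^ k) = traceChar K x :=
  traceChar_ringEquiv (iterateFrobeniusEquiv K 2 k) x

theorem traceChar_algebraMap {E : Type*} [Field E] [Algebra (ZMod 2) E] [Finite K] [Algebra E K]
    (x : E) : traceChar K (algebraMap E K x) = traceChar E x ^ finrank E K := by
  have : Finite E := Finite.of_injective _ (algebraMap E K).injective
  have : IsScalarTower (ZMod 2) E K := .of_algebraMap_eq' (Subsingleton.elim _ _)
  have htrace : Algebra.trace (ZMod 2) K (algebraMap E K x) =
      finrank E K • Algebra.trace (ZMod 2) E x := by
    rw [← Algebra.trace_trace (S := E), Algebra.trace_algebraMap, map_nsmul]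
  rw [← AddChar.map_nsmul_eq_pow, traceChar_apply, traceChar_apply, htrace, map_nsmul]

theorem traceChar_isPrimitive [Finite K] : (traceChar K).IsPrimitive := by
  refine AddChar.IsPrimitive.of_ne_one fun h ↦ ?_
  obtain ⟨x, hx⟩ := Algebra.trace_surjective (ZMod 2) K 1
  have hx1 : traceChar K x = 1 := DFunLike.congr_fun h x
  rw [traceChar_apply, hx] at hx1
  norm_num [ZMod.val_one] at hx1

theorem isPeriodicPt_frobenius_finrank [Finite K] (x : K) :
    Function.IsPeriodicPt (frobenius K 2) (finrank (ZMod 2) K) x := by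
  have := Fintype.ofFinite K
  rw [isPeriodicPt_frobenius_iff]
  have hcard := natCard_eq_pow_finrank (K := ZMod 2) (V := K)
  rw [Nat.card_zmod] at hcard
  rw [← hcard, Nat.card_eq_fintype_card, FiniteField.pow_card]

theorem traceChar_eq_one_of_pow_two_pow_eq_self [Finite K] {d : ℕ} (hd : 2 * d ∣ finrank (ZMod 2) K)
    {x : K} (hx : x ^ 2 ^ d = x) : traceChar K x = 1 := by
  obtain ⟨E, hE⟩ := exists_intermediateField_finrank_eq (ZMod 2) K (dvd_of_mul_left_dvd hd)
  have hx' : x ∈ Set.range (algebraMap E K) := by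
    rwa [mem_range_algebraMap_iff_pow_card_eq, natCard_eq_pow_finrank (K := ZMod 2), hE,
      Nat.card_zmod]
  obtain ⟨e, rfl⟩ := hx'
  have heven : 2 ∣ finrank E K := by
    rw [← finrank_mul_finrank (ZMod 2) E K, hE, mul_comm 2] at hd
    exact Nat.dvd_of_mul_dvd_mul_left (hE ▸ finrank_pos) hd
  rw [traceChar_algebraMap, ← Nat.mul_div_cancel' heven, pow_mul, sq, traceChar_mul_self, one_pow]

theorem exists_sq_eq_add_one [Finite K] (hK : 2 ∣ finrank (ZMod 2) K) : ∃ w : K, w ^ 2 = w + 1 := by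
  have h3 : 3 ∣ Nat.card K - 1 := by
    obtain ⟨d, hd⟩ := hK
    rw [natCard_eq_pow_finrank (K := ZMod 2), Nat.card_zmod, hd, pow_mul]
    simpa using Nat.sub_dvd_pow_sub_pow 4 1 d
  obtain ⟨w, hw⟩ := exists_isPrimitiveRoot_of_dvd_card_sub_one h3
  have hsum := hw.geom_sum_eq_zero (by norm_num)
  simp only [sum_range_succ, range_zero, sum_empty, pow_zero, pow_one, zero_add] at hsum
  exact ⟨w, by rw [← CharTwo.add_eq_zero, ← hsum]; ring⟩

theorem pow_two_pow_mul_odd_eq_self_iff [Finite K] {n t : ℕ} (hK : finrank (ZMod 2) K = 4 * n)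
    (ht : Odd t) {x : K} : x ^ 2 ^ (n * t) = x ↔ x ^ 2 ^ n = x := by
  simp only [← isPeriodicPt_frobenius_iff]
  refine ⟨fun h ↦ ?_, fun h ↦ h.mul_const t⟩
  have hgcd : Nat.gcd (n * t) (4 * n) = n := by
    have hcop : Nat.gcd t (2 ^ 2) = 1 := (Nat.coprime_two_right.2 ht).pow_right 2
    rw [mul_comm 4 n, Nat.gcd_mul_left, show 4 = 2 ^ 2 from rfl, hcop, mul_one]
  exact hgcd ▸ h.gcd (hK ▸ isPeriodicPt_frobenius_finrank x)

theorem ncard_pow_two_pow_eq_self_or_add_one [Finite K] {n t : ℕ} (hK : finrank (ZMod 2) K = 4 * n)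
    (ht : Odd t) (hn : Odd n) :
    {x : K | x ^ 2 ^ (n * t) = x ∨ x ^ 2 ^ (n * t) = x + 1}.ncard = 2 ^ (n + 1) := by
  obtain ⟨w, hw⟩ := exists_sq_eq_add_one (K := K) (hK ▸ ⟨2 * n, by ring⟩)
  have hwq : w ^ 2 ^ (n * t) = w + 1 := pow_two_pow_odd_eq_add_one hw (hn.mul ht)
  have hfix : {x : K | x ^ 2 ^ (n * t) = x}.ncard = 2 ^ n := by
    simp only [pow_two_pow_mul_odd_eq_self_iff hK ht]
    simpa using ncard_pow_eq_self (ZMod 2) (L := K) (d := n) (hK ▸ dvd_mul_left n 4)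
  have hcoset : {x : K | x ^ 2 ^ (n * t) = x + 1} = (w + ·) '' {x | x ^ 2 ^ (n * t) = x} := by
    ext x
    simp only [Set.image_add_left, Set.mem_preimage, Set.mem_ofPred_eq, CharTwo.neg_eq,
      add_pow_char_pow, hwq]
    grind
  rw [Set.ofPred_or, Set.ncard_union_eq, hcoset,
    Set.ncard_image_of_injective _ (add_right_injective w), hfix, pow_succ, mul_two]
  exact Set.disjoint_left.2 fun x h h' ↦ one_ne_zero (left_eq_add.1 (Eq.trans (Eq.symm h) h'))

/-- The right-hand side `y ^ q₀ * (y ^ q + y)` of the equation `z ^ q + z = y ^ q₀ * (y ^ q + y)` of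
the Suzuki curve, with `q₀ = 2 ^ m` and `q = 2 ^ (2 * m + 1)`. -/
def suzukiRhs {R : Type*} [CommSemiring R] (m : ℕ) (y : R) : R :=
  y ^ 2 ^ m * (y ^ 2 ^ (2 * m + 1) + y)

theorem suzukiRhs_map {R S : Type*} [CommSemiring R] [CommSemiring S] (f : R →+* S) (m : ℕ)
    (y : R) : suzukiRhs m (f y) = f (suzukiRhs m y) := by
  simp only [suzukiRhs, map_mul, map_add, map_pow]

/-- The exponential sum over `K` attached to the equation of the Suzuki curve. -/
noncomputable def suzukiSum (m : ℕ) (K : Type*) [Field K] [Algebra (ZMod 2) K] [Fintype K] : ℤ :=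
  ∑ y : K, traceChar K (suzukiRhs m y)

theorem traceChar_suzukiRhs [Finite K] (m : ℕ) (y : K) :
    traceChar K (suzukiRhs m y) =
      traceChar K (y ^ (2 ^ (m + 1) + 1)) * traceChar K (y ^ (2 ^ m + 1)) := by
  rw [← traceChar_pow_two_pow m (y ^ (2 ^ (m + 1) + 1)), ← AddChar.map_add_eq_mul, suzukiRhs]
  ring_nf

theorem traceChar_suzukiRhs_add [Finite K] (m : ℕ) (x y : K) :
    traceChar K (suzukiRhs m (x + y)) * traceChar K (suzukiRhs m y) =
      traceChar K (suzukiRhs m x) *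
        traceChar K ((x ^ 2 ^ (2 * m + 1) + x + (x ^ 2 ^ (2 * m + 1) + x) ^ 2) *
          y ^ 2 ^ (m + 1)) := by
  set u := x ^ 2 ^ (2 * m + 1) + x with hu
  have hexpand : suzukiRhs m (x + y) + suzukiRhs m y = suzukiRhs m x +
      (y ^ 2 ^ m * u + x ^ 2 ^ m * y + x ^ 2 ^ m * y ^ 2 ^ (2 * m + 1)) := by
    simp only [suzukiRhs, add_pow_char_pow, hu]
    linear_combination CharTwo.add_self_eq_zero (y ^ 2 ^ m * (y ^ 2 ^ (2 * m + 1) + y))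
  have h1 : traceChar K (y ^ 2 ^ m * u) = traceChar K (u ^ 2 * y ^ 2 ^ (m + 1)) := by
    rw [← traceChar_pow_two_pow 1]
    ring_nf
  have h2 : traceChar K (x ^ 2 ^ m * y) = traceChar K (x ^ 2 ^ (2 * m + 1) * y ^ 2 ^ (m + 1)) := by
    rw [← traceChar_pow_two_pow (m + 1)]
    ring_nf
  have h3 : traceChar K (x ^ 2 ^ m * y ^ 2 ^ (2 * m + 1)) = traceChar K (x * y ^ 2 ^ (m + 1)) := by
    rw [← traceChar_pow_two_pow m (x * _)]
    ring_nf
  rw [← AddChar.map_add_eq_mul, hexpand]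
  simp only [AddChar.map_add_eq_mul]
  rw [h1, h2, h3, ← AddChar.map_add_eq_mul, ← AddChar.map_add_eq_mul]
  congr 2
  ring

theorem traceChar_suzukiRhs_eq_one [Finite K] {m n t : ℕ} (hK : finrank (ZMod 2) K = 4 * n)
    (hnt : n * t = 2 * m + 1) {x : K}
    (hx : x ^ 2 ^ (2 * m + 1) = x ∨ x ^ 2 ^ (2 * m + 1) = x + 1) :
    traceChar K (suzukiRhs m x) = 1 := by
  rcases hx with hx | hx
  · rw [suzukiRhs, hx, CharTwo.add_self_eq_zero, mul_zero, AddChar.map_zero_eq_one]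
  · have hxx : x ^ 2 ^ (2 * (n * t)) = x := by
      rw [hnt, two_mul, pow_add, pow_mul, hx, add_pow_char_pow, hx, one_pow, add_assoc,
        CharTwo.add_self_eq_zero, add_zero]
    have hfix : x ^ 2 ^ (2 * n) = x := by
      have ht : Odd t := (Nat.odd_mul.1 (hnt ▸ odd_two_mul_add_one m)).2
      have hgcd : Nat.gcd (2 * n * t) (4 * n) = 2 * n := by
        rw [show 4 * n = 2 * n * 2 by ring, Nat.gcd_mul_left, Nat.coprime_two_right.2 ht, mul_one]
      rw [← mul_assoc, ← isPeriodicPt_frobenius_iff] at hxx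
      exact isPeriodicPt_frobenius_iff.1 (hgcd ▸ hxx.gcd (hK ▸ isPeriodicPt_frobenius_finrank x))
    rw [suzukiRhs, hx, add_right_comm, CharTwo.add_self_eq_zero, zero_add, mul_one,
      traceChar_pow_two_pow, traceChar_eq_one_of_pow_two_pow_eq_self (d := 2 * n) _ hfix]
    rw [hK]
    exact ⟨1, by ring⟩

theorem suzukiSum_sq [Fintype K] {m n t : ℕ} (hK : finrank (ZMod 2) K = 4 * n)
    (hnt : n * t = 2 * m + 1) : suzukiSum m K ^ 2 = 2 ^ (5 * n + 1) := by
  classical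
  obtain ⟨hn, ht⟩ := Nat.odd_mul.1 (hnt ▸ odd_two_mul_add_one m)
  let u (x : K) : K := x ^ 2 ^ (2 * m + 1) + x
  let B (x : K) : AddChar K ℤ := ((traceChar K).mulShift (u x + u x ^ 2)).compAddMonoidHom
    (iterateFrobenius K 2 (m + 1)).toAddMonoidHom
  have hB (x : K) : B x = 0 ↔ x ^ 2 ^ (2 * m + 1) = x ∨ x ^ 2 ^ (2 * m + 1) = x + 1 := by
    have hshift : B x = 0 ↔ (traceChar K).mulShift (u x + u x ^ 2) = (traceChar K).mulShift 0 := by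
      rw [AddChar.mulShift_zero]
      exact (AddChar.compAddMonoidHom_injective_left _
        (bijective_iterateFrobenius K 2 _).surjective).eq_iff' rfl
    rw [hshift, (AddChar.to_mulShift_inj_of_isPrimitive traceChar_isPrimitive).eq_iff]
    grind
  have hcard : Fintype.card K = 2 ^ (4 * n) := by
    rw [← hK, ← Nat.card_eq_fintype_card, natCard_eq_pow_finrank (K := ZMod 2), Nat.card_zmod]
  have hradical : #{x | B x = 0} = 2 ^ (n + 1) := by
    rw [← ncard_pow_two_pow_eq_self_or_add_one hK ht hn, hnt, ← Set.ncard_coe_finset]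
    simp [hB]
  rw [suzukiSum, sq_sum_eq_card_mul_sum_radical _ B (traceChar_suzukiRhs_add m),
    sum_congr rfl fun x hx ↦ traceChar_suzukiRhs_eq_one hK hnt ((hB x).1 (mem_filter.1 hx).2),
    sum_const, hradical, hcard]
  push_cast
  ring

theorem suzukiSum_cast_eq {E : Type*} [Field E] [Algebra (ZMod 2) E] [Algebra E K] [Fintype E]
    [Fintype K] (m : ℕ) {p k : ℕ} [Fact p.Prime] (hodd : Odd p) (hEK : finrank E K = p ^ k) :
    (suzukiSum m K : ZMod p) = suzukiSum m E := by
  classical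
  have hgroup : IsPGroup p (K ≃ₐ[E] K) := .of_card ((IsGalois.card_aut_eq_finrank E K).trans hEK)
  have hinvariant (σ : K ≃ₐ[E] K) (y : K) :
      traceChar K (suzukiRhs m (σ • y)) = traceChar K (suzukiRhs m y) := by
    rw [← traceChar_ringEquiv σ.toRingEquiv (suzukiRhs m y)]
    exact congrArg _ (suzukiRhs_map (σ.toRingEquiv : K →+* K) m y)
  have hfixed : ({y | y ∈ MulAction.fixedPoints (K ≃ₐ[E] K) K} : Finset K) =
      univ.map ⟨algebraMap E K, (algebraMap E K).injective⟩ := by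
    ext y
    simp only [mem_filter_univ, mem_map, mem_univ, true_and, Function.Embedding.coeFn_mk]
    exact (IsGalois.mem_range_algebraMap_iff_fixed y).symm
  have hrestrict (e : E) :
      traceChar K (suzukiRhs m (algebraMap E K e)) = traceChar E (suzukiRhs m e) := by
    obtain ⟨j, hj⟩ := hodd.pow (n := k)
    rw [suzukiRhs_map, traceChar_algebraMap, hEK, hj, pow_succ, pow_mul, sq, traceChar_mul_self,
      one_pow, one_mul]
  rw [suzukiSum, suzukiSum, Int.cast_sum, Int.cast_sum,
    sum_eq_sum_fixedPoints_of_isPGroup hgroup _ fun σ y ↦ by rw [hinvariant], hfixed, sum_map]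
  simp only [Function.Embedding.coeFn_mk, hrestrict]

theorem traceChar_pow_two_pow_add_one [Finite K] (hK : finrank (ZMod 2) K = 4) (k : ℕ) (y : K) :
    traceChar K (y ^ (2 ^ k + 1)) =
      if k % 4 = 0 then traceChar K y else if k % 4 = 2 then 1 else traceChar K (y ^ 3) := by
  have hperiodic := isPeriodicPt_frobenius_finrank y
  rw [hK] at hperiodic
  have hy : y ^ 16 = y := isPeriodicPt_frobenius_iff.1 hperiodic
  have hmod : y ^ (2 ^ k + 1) = y ^ (2 ^ (k % 4) + 1) := by
    rw [pow_succ, ← iterate_frobenius, ← hperiodic.iterate_mod_apply, iterate_frobenius, pow_succ]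
  have hlt : k % 4 < 4 := Nat.mod_lt _ (by norm_num)
  rw [hmod]
  interval_cases k % 4
  · exact traceChar_pow_two_pow 1 y
  · rfl
  · exact traceChar_eq_one_of_pow_two_pow_eq_self (d := 2) (by rw [hK])
      (by linear_combination y ^ 4 * hy)
  · refine (traceChar_pow_two_pow 1 _).symm.trans (congrArg _ ?_)
    linear_combination y ^ 2 * hy

theorem sum_traceChar_cube_cast [Fintype K] (hK : finrank (ZMod 2) K = 4) :
    ((∑ y : K, traceChar K (y ^ 3) : ℤ) : ZMod 3) = 1 := by
  have h3 : 3 ∣ Nat.card K - 1 := by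
    rw [natCard_eq_pow_finrank (K := ZMod 2), Nat.card_zmod, hK]
    norm_num
  rw [Int.cast_sum, sum_pow_prime_eq_apply_zero h3 fun y : K ↦ (traceChar K y : ZMod 3),
    AddChar.map_zero_eq_one, Int.cast_one]

theorem exists_pow_four_eq_add_one [Finite K] (hK : finrank (ZMod 2) K = 4) :
    ∃ c : K, c ^ 4 = c + 1 := by
  have h5 : 5 ∣ Nat.card K - 1 := by
    rw [natCard_eq_pow_finrank (K := ZMod 2), Nat.card_zmod, hK]
    norm_num
  obtain ⟨u, hu⟩ := exists_isPrimitiveRoot_of_dvd_card_sub_one h5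
  have hsum := hu.geom_sum_eq_zero (by norm_num)
  simp only [sum_range_succ, range_zero, sum_empty, pow_zero, pow_one, zero_add] at hsum
  refine ⟨u + u ^ 2, ?_⟩
  rw [show 4 = 2 ^ 2 by norm_num, add_pow_char_pow]
  linear_combination hsum + u ^ 3 * hu.pow_eq_one - (u ^ 2 + u + 1) * CharTwo.two_eq_zero (R := K)

theorem traceChar_cube_eq_neg_one [Finite K] (hK : finrank (ZMod 2) K = 4) {c : K}
    (hc : c ^ 4 = c + 1) : traceChar K (c ^ 3) = -1 := by
  have h2 := CharTwo.two_eq_zero (R := K)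
  have htrace : algebraMap (ZMod 2) K (Algebra.trace (ZMod 2) K (c ^ 3)) =
      algebraMap (ZMod 2) K 1 := by
    rw [FiniteField.algebraMap_trace_eq_sum_pow, hK]
    simp only [sum_range_succ, range_zero, sum_empty, Nat.card_zmod, map_one]
    have h8 : c ^ 8 = c ^ 2 + 1 := by
      linear_combination (c ^ 4 + c + 1) * hc + c * h2
    have h16 : c ^ 16 = c := by
      linear_combination (c ^ 8 + c ^ 2 + 1) * h8 + hc + (c ^ 2 + 1) * h2
    linear_combination c ^ 2 * hc + c ^ 4 * h8 + (c ^ 2 + 1) * hc + c ^ 16 * h8 +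
      (c ^ 2 + 1) * h16 + (2 * c ^ 3 + c ^ 2 + c) * h2
  rw [traceChar_apply, (algebraMap (ZMod 2) K).injective htrace]
  norm_num [ZMod.val_one]

theorem sum_traceChar_cube_mul [Fintype K] (hK : finrank (ZMod 2) K = 4) :
    ∑ y : K, traceChar K (y ^ 3) * traceChar K y = -∑ y : K, traceChar K (y ^ 3) := by
  obtain ⟨c, hc⟩ := exists_pow_four_eq_add_one hK
  have hshift (y : K) : traceChar K ((y + c) ^ 3) = -(traceChar K (y ^ 3) * traceChar K y) := by
    have hpolar : traceChar K (y ^ 2 * c + y * c ^ 2) = traceChar K y := by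
      rw [AddChar.map_add_eq_mul, ← traceChar_pow_two_pow 1 (y * c ^ 2), ← AddChar.map_add_eq_mul,
        ← traceChar_pow_two_pow 1 y]
      congr 1
      linear_combination y ^ 2 * hc + y ^ 2 * c * CharTwo.two_eq_zero (R := K)
    have hcube : (y + c) ^ 3 = y ^ 3 + c ^ 3 + (y ^ 2 * c + y * c ^ 2) := by
      linear_combination (y ^ 2 * c + y * c ^ 2) * CharTwo.two_eq_zero (R := K)
    rw [hcube, AddChar.map_add_eq_mul, AddChar.map_add_eq_mul, hpolar,
      traceChar_cube_eq_neg_one hK hc]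
    ring
  rw [← Fintype.sum_equiv (Equiv.addRight c) (fun y ↦ traceChar K ((y + c) ^ 3))
    (fun y ↦ traceChar K (y ^ 3)) fun _ ↦ rfl]
  simp only [hshift, sum_neg_distrib, neg_neg]

theorem suzukiSum_of_finrank_eq_four [Fintype K] (hK : finrank (ZMod 2) K = 4) (m : ℕ) :
    suzukiSum m K = ZMod.χ₈ (2 * m + 1 : ℕ) * 8 := by
  have hcube (k : ℕ) : suzukiSum k K =
      if k % 4 = 1 ∨ k % 4 = 2 then ∑ y : K, traceChar K (y ^ 3)
      else -∑ y : K, traceChar K (y ^ 3) := by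
    rw [← sum_traceChar_cube_mul hK, suzukiSum]
    simp only [traceChar_suzukiRhs, traceChar_pow_two_pow_add_one hK]
    have hlt : k % 4 < 4 := Nat.mod_lt _ (by norm_num)
    rw [Nat.add_mod]
    interval_cases k % 4 <;> simp [mul_comm]
  have hsq : (∑ y : K, traceChar K (y ^ 3)) ^ 2 = (-8) ^ 2 := by
    have := suzukiSum_sq (m := 1) (n := 1) (t := 3) hK rfl
    simpa [hcube] using this
  have hcop : IsCoprime ((3 : ℕ) : ℤ) (2 * -8) := Int.isCoprime_iff_gcd_eq_one.2 rfl
  have hsum : ∑ y : K, traceChar K (y ^ 3) = -8 :=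
    int_eq_of_sq_eq_sq_of_cast_eq (by norm_num) hcop hsq
      ((sum_traceChar_cube_cast hK).trans (by decide))
  rw [hcube, hsum, ZMod.χ₈_nat_eq_if_mod_eight]
  split_ifs <;> omega

/-- The value of the exponential sum `suzukiSum m K` over the field `K` of degree `4 * n` over `𝔽₂`,
where `n` divides `2 * m + 1`. For odd `n` the exponent of `2` is half of `5 * n + 1`. -/
def suzukiSumValue (m n : ℕ) : ℤ :=
  ZMod.χ₈ n * ZMod.χ₈ (2 * m + 1 : ℕ) * 2 ^ (5 * (n / 2) + 3)

theorem suzukiSumValue_sq (m : ℕ) {n : ℕ} (hn : Odd n) :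
    suzukiSumValue m n ^ 2 = 2 ^ (5 * n + 1) := by
  rw [suzukiSumValue, mul_pow, mul_pow, χ₈_nat_sq_of_odd hn,
    χ₈_nat_sq_of_odd (odd_two_mul_add_one m), ← pow_mul, one_mul, one_mul]
  congr 1
  grind

theorem suzukiSumValue_cast {p : ℕ} [Fact p.Prime] (m : ℕ) {n : ℕ} (hp : Odd p) (hn : Odd n) :
    (suzukiSumValue m (p * n) : ZMod p) = suzukiSumValue m n := by
  have hhalf : 5 * (p * n / 2) + 3 = p / 2 * (5 * n) + (5 * (n / 2) + 3) := by
    obtain ⟨i, rfl⟩ := hp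
    obtain ⟨j, rfl⟩ := hn
    rw [show (2 * i + 1) * (2 * j + 1) = 2 * (i * (2 * j + 1) + j) + 1 by ring]
    simp only [Nat.mul_add_div two_pos, Nat.reduceDiv, add_zero]
    ring
  have hchi : (ZMod.χ₈ p : ZMod p) ^ (5 * n) = (ZMod.χ₈ p : ℤ) := by
    rw [← Int.cast_pow, ← MulChar.pow_apply' _ (by grind),
      ZMod.isQuadratic_χ₈.pow_odd (.mul (by decide) hn)]
  have hone : ((ZMod.χ₈ p : ℤ) : ZMod p) ^ 2 = 1 :=
    mod_cast congrArg (Int.cast (R := ZMod p)) (χ₈_nat_sq_of_odd hp)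
  have hp2 : p ≠ 2 := hp.ne_two_of_dvd_nat dvd_rfl
  simp only [suzukiSumValue, Int.cast_mul, Int.cast_pow, Int.cast_ofNat, hhalf,
    pow_add _ (p / 2 * _), pow_mul _ (p / 2), two_pow_half_eq_χ₈ hp2, hchi, Nat.cast_mul, map_mul]
  linear_combination
    (ZMod.χ₈ n : ZMod p) * (ZMod.χ₈ (2 * m + 1 : ℕ) : ZMod p) * 2 ^ (5 * (n / 2) + 3) * hone

theorem suzukiSum_eq [Fintype K] {m n : ℕ} (hn : n ∣ 2 * m + 1)
    (hK : finrank (ZMod 2) K = 4 * n) : suzukiSum m K = suzukiSumValue m n := by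
  induction n using induction_on_primes generalizing K with
  | zero => exact absurd (zero_dvd_iff.1 hn) (Nat.succ_ne_zero _)
  | one =>
    rw [suzukiSum_of_finrank_eq_four hK, suzukiSumValue, Nat.cast_one, map_one, one_mul]
    rfl
  | prime_mul p n hp ih =>
    have : Fact p.Prime := ⟨hp⟩
    have hodd := Odd.of_dvd_nat (odd_two_mul_add_one m) hn
    obtain ⟨hpodd, hnodd⟩ := Nat.odd_mul.1 hodd
    obtain ⟨E, hE⟩ := exists_intermediateField_finrank_eq (ZMod 2) K
      (d := 4 * n) (hK ▸ ⟨p, by ring⟩)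
    have : Fintype E := .ofFinite E
    have hEK : finrank E K = p ^ 1 := by
      refine Nat.eq_of_mul_eq_mul_left (hE ▸ finrank_pos : 0 < 4 * n) ?_
      rw [← hE, finrank_mul_finrank, hK, hE]
      ring
    have hcast : (suzukiSum m K : ZMod p) = suzukiSumValue m (p * n) := by
      rw [suzukiSum_cast_eq m hpodd hEK, ih (dvd_of_mul_left_dvd hn) hE,
        suzukiSumValue_cast m hpodd hnodd]
    obtain ⟨t, ht⟩ := hn
    have hvalue := suzukiSumValue_sq m hodd
    have hcop : IsCoprime (p : ℤ) 2 := Nat.isCoprime_iff_coprime.2 (Nat.coprime_two_right.2 hpodd)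
    refine int_eq_of_sq_eq_sq_of_cast_eq hp.ne_one (hcop.mul_right ?_)
      ((suzukiSum_sq hK ht.symm).trans hvalue.symm) hcast
    rw [← IsCoprime.pow_right_iff two_pos, hvalue]
    exact hcop.pow_right

theorem suzukiSum_of_finrank_eq [Fintype K] {m : ℕ} (hK : finrank (ZMod 2) K = 4 * (2 * m + 1)) :
    suzukiSum m K = 2 ^ (5 * m + 3) := by
  rw [suzukiSum_eq dvd_rfl hK, suzukiSumValue, ← sq, χ₈_nat_sq_of_odd (odd_two_mul_add_one m),
    one_mul, Nat.mul_add_div two_pos]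
  congr 1

theorem sum_traceChar_mul_suzukiRhs [Fintype K] {m : ℕ} {c : K} (hc : c ≠ 0)
    (hcq : c ^ 2 ^ (2 * m + 1) = c) : ∑ y, traceChar K (c * suzukiRhs m y) = suzukiSum m K := by
  obtain ⟨d, hdq, hdc⟩ : ∃ d : K, d ^ 2 ^ (2 * m + 1) = d ∧ d ^ (2 ^ m + 1) = c := by
    obtain ⟨a, ha⟩ : ∃ a, 2 ^ m = a + 1 := Nat.exists_eq_add_one.2 (Nat.two_pow_pos m)
    have hq : 2 ^ (2 * m + 1) = 2 * a ^ 2 + 4 * a + 1 + 1 := by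
      rw [pow_succ, mul_comm 2 m, pow_mul, ha]
      ring
    have hone : c ^ (2 * a ^ 2 + 4 * a + 1) = 1 := by
      rwa [hq, pow_succ, mul_eq_right₀ hc] at hcq
    -- the exponent `q - 2 * q₀ + 1` is an inverse of `q₀ + 1` modulo `q - 1`
    refine ⟨c ^ (2 * a ^ 2 + 2 * a + 1), by rw [pow_right_comm, hcq], ?_⟩
    rw [← pow_mul, show (2 * a ^ 2 + 2 * a + 1) * (2 ^ m + 1) =
      (2 * a ^ 2 + 4 * a + 1) * (a + 1) + 1 by rw [ha]; ring, pow_succ, pow_mul, hone, one_pow,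
      one_mul]
  have hd : d ≠ 0 := by
    rintro rfl
    exact hc (hdc ▸ zero_pow (Nat.succ_ne_zero _))
  have hscale (y : K) : c * suzukiRhs m y = suzukiRhs m (d * y) := by
    rw [suzukiRhs, suzukiRhs, mul_pow, mul_pow, hdq, ← hdc]
    ring
  exact Fintype.sum_equiv (Equiv.mulLeft₀ d hd) _ _ fun y ↦ congrArg _ (hscale y)

theorem sum_traceChar_mul_pow_add_self [Fintype K] [DecidableEq K] (k : ℕ) (c : K) :
    ∑ z, traceChar K (c ^ 2 ^ k * (z ^ 2 ^ k + z)) =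
      if c ^ 2 ^ k = c then (Fintype.card K : ℤ) else 0 := by
  have hlinear (z : K) : traceChar K (c ^ 2 ^ k * (z ^ 2 ^ k + z)) =
      traceChar K (z * (c + c ^ 2 ^ k)) := by
    rw [mul_add, mul_add, AddChar.map_add_eq_mul, AddChar.map_add_eq_mul, ← mul_pow,
      traceChar_pow_two_pow, mul_comm c, mul_comm z (c ^ _)]
  simp only [hlinear, AddChar.sum_mulShift _ traceChar_isPrimitive, CharTwo.add_eq_zero,
    eq_comm (a := c), Nat.cast_ite, Nat.cast_zero]

theorem ncard_pow_add_self_eq [Fintype K] [DecidableEq K] (k : ℕ) (F : K → K) :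
    ({p : K × K | p.2 ^ 2 ^ k + p.2 = F p.1}.ncard : ℤ) =
      ∑ c with c ^ 2 ^ k = c, ∑ y, traceChar K (c * F y) := by
  have hcard : (Fintype.card K : ℤ) ≠ 0 := mod_cast Fintype.card_ne_zero
  refine mul_left_cancel₀ hcard ?_
  calc (Fintype.card K : ℤ) * ({p : K × K | p.2 ^ 2 ^ k + p.2 = F p.1}.ncard : ℤ)
      = ∑ p : K × K, ∑ c, traceChar K (c * (p.2 ^ 2 ^ k + p.2 + F p.1)) := by
        simp only [AddChar.sum_mulShift _ traceChar_isPrimitive, CharTwo.add_eq_zero,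
          Set.ncard_eq_toFinset_card']
        simp [Finset.sum_ite, mul_comm]
    _ = ∑ c : K, ∑ p : K × K, traceChar K (c ^ 2 ^ k * (p.2 ^ 2 ^ k + p.2 + F p.1)) := by
        rw [sum_comm]
        exact (Fintype.sum_equiv (iterateFrobeniusEquiv K 2 k).toEquiv _ _ fun c ↦ rfl).symm
    _ = ∑ c : K, (∑ y, traceChar K (c ^ 2 ^ k * F y)) *
          ∑ z, traceChar K (c ^ 2 ^ k * (z ^ 2 ^ k + z)) := by
        refine sum_congr rfl fun c _ ↦ ?_
        rw [Fintype.sum_prod_type, sum_mul_sum]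
        simp only [mul_add, AddChar.map_add_eq_mul, mul_comm, mul_left_comm]
    _ = Fintype.card K * ∑ c with c ^ 2 ^ k = c, ∑ y, traceChar K (c * F y) := by
        simp only [sum_traceChar_mul_pow_add_self, mul_sum _ _ (Fintype.card K : ℤ), sum_filter]
        refine sum_congr rfl fun c _ ↦ ?_
        split_ifs with hc
        · rw [hc, mul_comm]
        · rw [mul_zero, mul_zero]

theorem ncard_suzuki_eq [Fintype K] {m : ℕ} (hm : 2 * m + 1 ∣ finrank (ZMod 2) K) :
    ({p : K × K | p.2 ^ 2 ^ (2 * m + 1) + p.2 = suzukiRhs m p.1}.ncard : ℤ) =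
      Fintype.card K + (2 ^ (2 * m + 1) - 1) * suzukiSum m K := by
  classical
  have hfixed : #{c : K | c ^ 2 ^ (2 * m + 1) = c} = 2 ^ (2 * m + 1) := by
    simpa [Set.ncard_eq_toFinset_card'] using ncard_pow_eq_self (ZMod 2) hm
  have hzero : (0 : K) ∈ ({c | c ^ 2 ^ (2 * m + 1) = c} : Finset K) :=
    (mem_filter_univ _).2 (zero_pow (Nat.two_pow_pos _).ne')
  have htwist : ∀ c ∈ ({c | c ^ 2 ^ (2 * m + 1) = c} : Finset K).erase 0,
      ∑ y, traceChar K (c * suzukiRhs m y) = suzukiSum m K := by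
    intro c hc
    obtain ⟨hc0, hcq⟩ := mem_erase.1 hc
    rw [mem_filter_univ] at hcq
    exact sum_traceChar_mul_suzukiRhs hc0 hcq
  rw [ncard_pow_add_self_eq, ← add_sum_erase _ _ hzero, sum_congr rfl htwist, sum_const,
    nsmul_eq_mul, cast_card_erase_of_mem hzero, hfixed]
  simp

end CharacteristicTwo

theorem suzuki_maximal_q_fourth_general {K : Type*} [Field K] [Finite K] (m q0 q g : ℕ)
    (hq0 : q0 = 2 ^ m) (hq : q = 2 ^ (2 * m + 1)) (hg : g = q0 * (q - 1))
    (hK : Nat.card K = q ^ 4) :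
    {p : K × K | p.2 ^ q + p.2 = p.1 ^ (q0 + q) + p.1 ^ (q0 + 1)}.ncard =
      q ^ 4 + 2 * q ^ 2 * g := by
  classical
  have := Fintype.ofFinite K
  subst hq0 hq hg
  rw [← pow_mul] at hK
  have : CharP K 2 := charP_of_card_eq_prime_pow (Nat.card_eq_fintype_card.symm.trans hK)
  let _ : Algebra (ZMod 2) K := ZMod.algebra K 2
  have hfinrank : finrank (ZMod 2) K = 4 * (2 * m + 1) := by
    rw [natCard_eq_pow_finrank (K := ZMod 2), Nat.card_zmod] at hK
    rw [Nat.pow_right_injective le_rfl hK, mul_comm]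
  have hcurve : {p : K × K | p.2 ^ 2 ^ (2 * m + 1) + p.2 =
      p.1 ^ (2 ^ m + 2 ^ (2 * m + 1)) + p.1 ^ (2 ^ m + 1)} =
      {p | p.2 ^ 2 ^ (2 * m + 1) + p.2 = suzukiRhs m p.1} := by
    simp only [suzukiRhs, mul_add, pow_add, pow_one]
  have hcount := ncard_suzuki_eq (hfinrank ▸ dvd_mul_left _ 4)
  rw [suzukiSum_of_finrank_eq hfinrank, ← Nat.card_eq_fintype_card, hK] at hcount
  rw [hcurve]
  zify [Nat.one_le_two_pow]
  rw [hcount]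
  push_cast
  ring

theorem suzuki_maximal_q_fourth
    (m : ℕ) (hm : 1 ≤ m) (q0 q g : ℕ)
    (hq0 : q0 = 2 ^ m) (hq : q = 2 ^ (2 * m + 1)) (hg : g = q0 * (q - 1)) :
    {p : GaloisField 2 (4 * (2 * m + 1)) × GaloisField 2 (4 * (2 * m + 1)) |
        p.2 ^ q + p.2 = p.1 ^ (q0 + q) + p.1 ^ (q0 + 1)}.ncard = q ^ 4 + 2 * q ^ 2 * g := by
  refine suzuki_maximal_q_fourth_general m q0 q g hq0 hq hg ?_
  rw [GaloisField.card 2 _ (by positivity), hq, ← pow_mul, mul_comm]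
end
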